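/- arXiv:math/0411009 — 2 statements merged into one kernel-verified Lean document; each statement's English description precedes it below -/
import Mathlib

section
/- For every integer r with 2 ≤ r ≤ 6, every finite simple graph that has no K_r minor is generically (r−2)-stress free. -/
open scoped Classical

/-- `H` is a minor of `G`: there is a family of pairwise disjoint nonempty connected
"branch sets" in `G`, one for each vertex of `H`, such that every edge of `H` is
realized by an edge of `G` between the corresponding branch sets. -/
def HasMinor {V W : Type*} (G : SimpleGraph V) (H : SimpleGraph W) : Prop :=
  ∃ B : W → Set V,
    (∀ i, (B i).Nonempty) ∧
    (∀ i j, i ≠ j → Disjoint (B i) (B j)) ∧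
    (∀ i, (G.induce (B i)).Connected) ∧
    (∀ i j, H.Adj i j → ∃ x ∈ B i, ∃ y ∈ B j, G.Adj x y)

/-- `w : E(G) → ℝ` is a stress of the embedding `f : V → ℝ^d`. -/
noncomputable def IsStress {V : Type*} [Fintype V] (G : SimpleGraph V) (d : ℕ)
    (f : V → EuclideanSpace ℝ (Fin d)) (w : G.edgeSet → ℝ) : Prop :=
  ∀ v : V,
    (∑ u : V, if h : G.Adj v u then w ⟨s(v, u), G.mem_edgeSet.mpr h⟩ • (f v - f u) else 0) = 0

/-- The set of `d`-embeddings of `G` whose only stress is the zero function. -/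
def StressFreeEmbeddings {V : Type*} [Fintype V] (G : SimpleGraph V) (d : ℕ) :
    Set (V → EuclideanSpace ℝ (Fin d)) :=
  {f | ∀ w : G.edgeSet → ℝ, IsStress G d f w → w = 0}

/-- `G` is generically `d`-stress free: the set of `d`-embeddings with no nonzero
stress is open and dense in the space of all `d`-embeddings. -/
def GenericallyStressFree {V : Type*} [Fintype V] (G : SimpleGraph V) (d : ℕ) : Prop :=
  IsOpen (StressFreeEmbeddings G d) ∧ Dense (StressFreeEmbeddings G d)

namespace KrMinor

/-! ### A finite search -/

/-- Some element of the first block is adjacent to some element of the second one. -/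
def adjBl (E : ℕ → ℕ → Bool) (b c : List ℕ) : Bool := b.any fun x => c.any fun y => E x y

/-- All distinct blocks are adjacent. -/
def pwBl (E : ℕ → ℕ → Bool) : List (List ℕ) → Bool
  | [] => true
  | b :: bs => bs.all (adjBl E b) && pwBl E bs

/-- The members of a block are pairwise adjacent. -/
def clq (E : ℕ → ℕ → Bool) : List ℕ → Bool
  | [] => true
  | x :: xs => xs.all (E x) && clq E xs

/-- The blocks form a model of a complete graph. -/
def k5 (E : ℕ → ℕ → Bool) (bl : List (List ℕ)) : Bool := bl.all (clq E) && pwBl E bl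

/-- The graph with one more edge. -/
def addE (E : ℕ → ℕ → Bool) (x y : ℕ) : ℕ → ℕ → Bool := fun i j =>
  E i j || (Nat.beq i x && Nat.beq j y) || (Nat.beq i y && Nat.beq j x)

/-- The adjacency function given by a list of rows of non-neighbours. -/
def rowsE (rows : List ℕ) : ℕ → ℕ → Bool := fun i j =>
  !(Nat.beq i j) && !(Nat.testBit (rows.getD i 0) j)

/-- The good graphs: octahedron and pentagonal bipyramid. -/
def goodE (vs : List ℕ) (ms : List (List (List ℕ))) (E : ℕ → ℕ → Bool) : Bool :=
  Nat.blt 5 vs.length && vs.all fun x => vs.all fun y =>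
    if E x y then
      vs.all fun z => !(E x z && E y z) || vs.all fun w => !(E x w && E y w) || Nat.beq z w ||
        (!(E z w) && vs.all fun u => !(E x u && E y u) || Nat.beq u z || Nat.beq u w)
    else Nat.beq x y || ms.any (k5 (addE E x y))

/-- Shape of a row: irreflexivity and greediness of the ordering. -/
def cand (vs : List ℕ) (k : ℕ) (r : ℕ) : Bool :=
  !(Nat.testBit r k) &&
    (Nat.testBit r (k + 1) || vs.all fun j => !(Nat.blt k j) || !(Nat.testBit r j))

/-- Filtering. -/
def fil (p : ℕ → Bool) : List ℕ → List ℕ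
  | [] => []
  | a :: l => bif p a then a :: fil p l else fil p l

/-- After choosing the row `r` for `k`, keep the compatible candidates for `j, j + 1, ...`. -/
def upd (k r : ℕ) : ℕ → List (List ℕ) → List (List ℕ)
  | _, [] => []
  | j, l :: Ls => fil (fun s => !(xor (Nat.testBit s k) (Nat.testBit r j))) l ::
      upd k r (Nat.succ j) Ls

/-- The initial candidates. -/
def cands (vs : List ℕ) (L : List ℕ) : List (List ℕ) := vs.map fun k => fil (cand vs k) L

/-- Exhaustive search. -/
def search (vs : List ℕ) (ms : List (List (List ℕ))) : ℕ → ℕ → List (List ℕ) → List ℕ → Bool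
  | 0, _, _, rows => ms.any (k5 (rowsE rows)) || goodE vs ms (rowsE rows)
  | _ + 1, _, [], _ => false
  | t + 1, k, l :: Ls, rows =>
    l.all fun r => search vs ms t (Nat.succ k) (upd k r (Nat.succ k) Ls) (rows ++ [r])

/-- Models on five, six or seven vertices. -/
def msOf : ℕ → List (List (List ℕ))
  | 5 => [[[0], [1], [2], [3], [4]]]
  | 6 => [[[1, 4], [0], [2], [3], [5]], [[0, 2], [1], [3], [4], [5]], [[2, 4], [0], [1], [3], [5]]]
  | 7 => [[[0, 4], [2, 5], [1], [3], [6]], [[0, 5], [1, 3], [2], [4], [6]],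
      [[0, 2], [3, 5], [1], [4], [6]], [[1, 5], [3, 6], [0], [2], [4]],
      [[0, 3], [1, 5], [2], [4], [6]], [[1, 3], [2, 4], [0], [5], [6]],
      [[0, 2], [4, 5], [1], [3], [6]], [[2, 4], [3, 5], [0], [1], [6]]]
  | _ => []

/-- Codes of small sets of non-neighbours. -/
def LOf : ℕ → List ℕ
  | 5 => [0]
  | 6 => [0, 1, 2, 4, 8, 16, 32]
  | 7 => [0, 1, 2, 4, 8, 16, 32, 64, 3, 5, 9, 17, 33, 65, 6, 10, 18, 34, 66,
      12, 20, 36, 68, 24, 40, 72, 48, 80, 96]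
  | _ => []

theorem search5 : search [0, 1, 2, 3, 4] (msOf 5) 5 0 (cands [0, 1, 2, 3, 4] (LOf 5)) [] = true := by
    decide +kernel

theorem search6 : search [0, 1, 2, 3, 4, 5] (msOf 6) 6 0 (cands [0, 1, 2, 3, 4, 5] (LOf 6)) [] = true := by
    decide +kernel

theorem search7 : search [0, 1, 2, 3, 4, 5, 6] (msOf 7) 7 0 (cands [0, 1, 2, 3, 4, 5, 6] (LOf 7)) [] = true := by
    decide +kernel

theorem searchN {n : ℕ} (h5 : 5 ≤ n) (h7 : n ≤ 7) :
    search (List.range n) (msOf n) n 0 (cands (List.range n) (LOf n)) [] = true := by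
  interval_cases n
  · exact search5
  · exact search6
  · exact search7

theorem ms_wf {n : ℕ} (h5 : 5 ≤ n) (h7 : n ≤ 7) :
    ∀ bl ∈ msOf n, bl.length = 5 ∧ bl.flatten.Nodup ∧ ∀ x ∈ bl.flatten, x < n := by
  interval_cases n <;> decide +kernel

theorem pair_mem : ∀ a < 7, ∀ b < 7, (2 ^ a ||| 2 ^ b) ∈ LOf 7 := by decide +kernel

theorem single_mem : ∀ a < 6, (2 ^ a) ∈ LOf 6 := by decide +kernel

theorem exists_row {n : ℕ} (h5 : 5 ≤ n) (h7 : n ≤ 7) (s : Finset ℕ) (hs : ∀ x ∈ s, x < n)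
    (hc : s.card + 5 ≤ n) : ∃ r ∈ LOf n, ∀ j, Nat.testBit r j = decide (j ∈ s) := by
  have hz : 0 ∈ LOf n := by interval_cases n <;> decide
  have hc2 : s.card ≤ 2 := by omega
  interval_cases h : s.card
  · rw [Finset.card_eq_zero] at h
    exact ⟨0, hz, by simp [h]⟩
  · rw [Finset.card_eq_one] at h
    obtain ⟨a, rfl⟩ := h
    have ha := hs a (by simp)
    refine ⟨2 ^ a, ?_, ?_⟩
    · obtain rfl | rfl : n = 6 ∨ n = 7 := by omega
      · exact single_mem a ha
      · simpa using pair_mem a ha a ha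
    · intro j
      simp [Nat.testBit_two_pow, eq_comm]
  · rw [Finset.card_eq_two] at h
    obtain ⟨a, b, hab, rfl⟩ := h
    have ha := hs a (by simp)
    have hb := hs b (by simp)
    obtain rfl : n = 7 := by omega
    refine ⟨2 ^ a ||| 2 ^ b, pair_mem a ha b hb, ?_⟩
    intro j
    simp [Nat.testBit_or, Nat.testBit_two_pow, eq_comm]

theorem mem_fil (p : ℕ → Bool) (a : ℕ) : ∀ l, a ∈ l → p a = true → a ∈ fil p l := by
  intro l
  induction l with
  | nil => simp
  | cons b l ih =>
    intro ha hp
    rw [fil]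
    rcases List.mem_cons.1 ha with rfl | h
    · simp [hp]
    · cases hb : p b
      · simpa using ih h hp
      · simpa using Or.inr (ih h hp)

theorem length_upd (k r : ℕ) : ∀ Ls j, (upd k r j Ls).length = Ls.length := by
  intro Ls
  induction Ls with
  | nil => simp [upd]
  | cons l Ls ih => simp [upd, ih]

theorem mem_upd (row : ℕ → ℕ) (k n : ℕ)
    (hs : ∀ j < n, Nat.testBit (row j) k = Nat.testBit (row k) j) :
    ∀ Ls j, j + Ls.length ≤ n → (∀ i l, Ls[i]? = some l → row (j + i) ∈ l) →
      ∀ i l, (upd k (row k) j Ls)[i]? = some l → row (j + i) ∈ l := by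
  intro Ls
  induction Ls with
  | nil =>
    intro j _ _ i l h
    simp [upd] at h
  | cons l0 Ls ih =>
    intro j hj hm i l h
    rw [List.length_cons] at hj
    rw [upd] at h
    rcases i with _ | i
    · rw [List.getElem?_cons_zero, Option.some.injEq] at h
      subst h
      apply mem_fil
      · exact hm 0 l0 rfl
      · rw [add_zero, hs j (by omega)]
        simp
    · rw [List.getElem?_cons_succ] at h
      have := ih (Nat.succ j) (by omega) (fun i' l' h' => by
        have := hm (i' + 1) l' (by simpa using h')
        rwa [show j + (i' + 1) = Nat.succ j + i' by omega] at this) i l h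
      rwa [show j + (i + 1) = Nat.succ j + i by omega]

theorem search_sound (vs : List ℕ) (ms : List (List (List ℕ))) (row : ℕ → ℕ) (n : ℕ)
    (hs : ∀ k < n, ∀ j < n, Nat.testBit (row j) k = Nat.testBit (row k) j) :
    ∀ t k Ls, k + t = n → Ls.length = t → (∀ i l, Ls[i]? = some l → row (k + i) ∈ l) →
      search vs ms t k Ls ((List.range k).map row) = true →
      (ms.any (k5 (rowsE ((List.range n).map row))) ||
        goodE vs ms (rowsE ((List.range n).map row))) = true := by
  intro t
  induction t with
  | zero =>
    intro k Ls hk _ _ h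
    obtain rfl : k = n := by omega
    simpa only [search] using h
  | succ t ih =>
    intro k Ls hk hlen hm h
    rcases Ls with _ | ⟨l, Ls⟩
    · simp at hlen
    rw [List.length_cons] at hlen
    rw [search, List.all_eq_true] at h
    have h1 := h (row k) (hm 0 l rfl)
    refine ih (Nat.succ k) (upd k (row k) (Nat.succ k) Ls) (by omega)
      (by rw [length_upd]; omega) ?_ ?_
    · refine mem_upd row k n (hs k (by omega)) Ls (Nat.succ k) (by omega) ?_
      intro i l' h'
      have := hm (i + 1) l' (by simpa using h')
      rwa [show k + (i + 1) = Nat.succ k + i by omega] at this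
    · rw [Nat.succ_eq_add_one, List.range_succ, List.map_append]
      simpa using h1

theorem getD_range_map (row : ℕ → ℕ) (n i : ℕ) (hi : i < n) :
    ((List.range n).map row).getD i 0 = row i := by
  simp [List.getD, hi]

/-- Greedy orderings. -/
def Greedy {V : Type*} (C : V → V → Prop) : List V → Prop
  | [] => True
  | a :: l => (∀ b l', l = b :: l' → (∃ j ∈ l, C a j) → C a b) ∧ Greedy C l

theorem exists_greedy {V : Type*} (C : V → V → Prop) :
    ∀ (m : ℕ) (S : Finset V) (v : V), S.card = m → v ∉ S →
      ∃ l : List V, (v :: l).Nodup ∧ (∀ x, x ∈ l ↔ x ∈ S) ∧ Greedy C (v :: l) := by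
  intro m
  induction m with
  | zero =>
    intro S v hS hv
    refine ⟨[], by simp, ?_, by simp [Greedy]⟩
    rw [Finset.card_eq_zero] at hS
    simp [hS]
  | succ m ih =>
    intro S v hS hv
    have hne : S.Nonempty := by rw [← Finset.card_pos]; omega
    obtain ⟨b, hb, hb2⟩ : ∃ b ∈ S, (∃ j ∈ S, C v j) → C v b := by
      by_cases h : ∃ j ∈ S, C v j
      · obtain ⟨j, hj, hc⟩ := h
        exact ⟨j, hj, fun _ => hc⟩
      · obtain ⟨b, hb⟩ := hne
        exact ⟨b, hb, fun h' => absurd h' h⟩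
    obtain ⟨l, hl1, hl2, hl3⟩ := ih (S.erase b) b (by rw [Finset.card_erase_of_mem hb]; omega) (by simp)
    have hmem : ∀ x, x ∈ b :: l ↔ x ∈ S := by
      intro x
      rw [List.mem_cons, hl2, Finset.mem_erase]
      constructor
      · rintro (rfl | h)
        · exact hb
        · exact h.2
      · intro h
        by_cases hx : x = b
        · exact Or.inl hx
        · exact Or.inr ⟨hx, h⟩
    refine ⟨b :: l, ?_, hmem, ?_, hl3⟩
    · rw [List.nodup_cons]
      exact ⟨fun h => hv ((hmem v).1 h), hl1⟩
    · intro b' l' he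
      rw [List.cons.injEq] at he
      obtain ⟨rfl, rfl⟩ := he
      rintro ⟨j, hj, hc⟩
      exact hb2 ⟨j, (hmem j).1 hj, hc⟩

theorem greedy_getD {V : Type*} (C : V → V → Prop) (d : V) : ∀ (l : List V), Greedy C l →
    ∀ i j, i < j → j < l.length → C (l.getD i d) (l.getD j d) →
      C (l.getD i d) (l.getD (i + 1) d) := by
  intro l
  induction l with
  | nil => intro _ i j _ hj; simp at hj
  | cons a l ih =>
    intro hg i j hij hj hc
    obtain ⟨j, rfl⟩ : ∃ j', j = j' + 1 := ⟨j - 1, by omega⟩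
    rcases i with _ | i
    · rcases l with _ | ⟨b, l'⟩
      · simp at hj
      · simp only [List.getD_cons_zero, List.getD_cons_succ, zero_add] at hc ⊢
        refine hg.1 b l' rfl ⟨_, ?_, hc⟩
        have : j < (b :: l').length := by simpa using hj
        rw [List.getD_eq_getElem _ _ this]
        exact List.getElem_mem _
    · simp only [List.getD_cons_succ] at hc ⊢
      exact ih hg.2 i j (by omega) (by simpa using hj) hc

/-- A model of `K_5` in the relation `R` on the set `N`, with clique blocks. -/
def Mod5 {V : Type*} (R : V → V → Prop) (N : Finset V) : Prop :=
  ∃ B : Fin 5 → Set V, (∀ i, ∀ x ∈ B i, x ∈ N) ∧ (∀ i j, i ≠ j → Disjoint (B i) (B j)) ∧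
    (∀ i, ∀ x ∈ B i, ∀ y ∈ B i, x ≠ y → R x y) ∧
    (∀ i j, i ≠ j → ∃ x ∈ B i, ∃ y ∈ B j, R x y)

theorem clq_pairwise (E : ℕ → ℕ → Bool) : ∀ l, clq E l = true → l.Pairwise (fun x y => E x y = true) := by
  intro l
  induction l with
  | nil => simp
  | cons a l ih =>
    intro h
    simp only [clq, Bool.and_eq_true, List.all_eq_true] at h
    exact List.pairwise_cons.2 ⟨h.1, ih h.2⟩

theorem pwBl_pairwise (E : ℕ → ℕ → Bool) :
    ∀ l, pwBl E l = true → l.Pairwise (fun b c => ∃ x ∈ b, ∃ y ∈ c, E x y = true) := by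
  intro l
  induction l with
  | nil => simp
  | cons a l ih =>
    intro h
    simp only [pwBl, Bool.and_eq_true, List.all_eq_true, adjBl, List.any_eq_true] at h
    exact List.pairwise_cons.2 ⟨h.1, ih h.2⟩

theorem mod5_of_k5 {V : Type*} (R : V → V → Prop) (hR : ∀ x y, R x y → R y x) (N : Finset V)
    (n : ℕ) (σ : ℕ → V) (hσ : ∀ i < n, σ i ∈ N) (hinj : ∀ i < n, ∀ j < n, σ i = σ j → i = j)
    (E : ℕ → ℕ → Bool) (hE : ∀ i < n, ∀ j < n, E i j = true → R (σ i) (σ j))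
    (bl : List (List ℕ)) (hlen : bl.length = 5) (hnd : bl.flatten.Nodup)
    (hlt : ∀ x ∈ bl.flatten, x < n) (h : k5 E bl = true) : Mod5 R N := by
  simp only [k5, Bool.and_eq_true, List.all_eq_true] at h
  obtain ⟨h1, h2⟩ := h
  have h2 := pwBl_pairwise E bl h2
  rw [List.nodup_flatten] at hnd
  obtain ⟨hnd1, hnd2⟩ := hnd
  have hget : ∀ i : Fin 5, (i : ℕ) < bl.length := fun i => by omega
  have hlt' : ∀ (i : Fin 5), ∀ x ∈ bl[(i : ℕ)]'(hget i), x < n := fun i x hx =>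
    hlt x (List.mem_flatten.2 ⟨_, List.getElem_mem _, hx⟩)
  refine ⟨fun i => {v | ∃ x ∈ bl[(i : ℕ)]'(hget i), σ x = v}, ?_, ?_, ?_, ?_⟩
  · rintro i _ ⟨x, hx, rfl⟩
    exact hσ x (hlt' i x hx)
  · have key : ∀ i j : Fin 5, i < j → ∀ x ∈ bl[(i : ℕ)]'(hget i), ∀ y ∈ bl[(j : ℕ)]'(hget j),
        σ x ≠ σ y := by
      intro i j hij x hx y hy hxy
      have := hinj x (hlt' i x hx) y (hlt' j y hy) hxy
      subst this
      exact (List.pairwise_iff_getElem.1 hnd2 i j (hget i) (hget j) hij) hx hy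
    intro i j hij
    rw [Set.disjoint_left]
    rintro _ ⟨x, hx, rfl⟩ ⟨y, hy, hxy⟩
    rcases lt_or_gt_of_ne hij with h | h
    · exact key i j h x hx y hy hxy.symm
    · exact key j i h y hy x hx hxy
  · rintro i _ ⟨x, hx, rfl⟩ _ ⟨y, hy, rfl⟩ hne
    have hp := clq_pairwise E _ (h1 _ (List.getElem_mem (hget i)))
    have : ∀ x ∈ bl[(i : ℕ)]'(hget i), ∀ y ∈ bl[(i : ℕ)]'(hget i), x ≠ y → R (σ x) (σ y) := by
      have hp' : (bl[(i : ℕ)]'(hget i)).Pairwise (fun x y => R (σ x) (σ y)) := by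
        refine hp.imp_of_mem ?_
        intro a b ha hb hab
        exact hE a (hlt' i a ha) b (hlt' i b hb) hab
      intro x hx y hy hxy
      have : Std.Symm (fun x y => R (σ x) (σ y)) := ⟨fun _ _ h => hR _ _ h⟩
      exact hp'.forall hx hy hxy
    exact this x hx y hy (fun h => hne (by rw [h]))
  · have key : ∀ i j : Fin 5, i < j → ∃ x ∈ bl[(i : ℕ)]'(hget i), ∃ y ∈ bl[(j : ℕ)]'(hget j),
        R (σ x) (σ y) := by
      intro i j hij
      obtain ⟨x, hx, y, hy, hxy⟩ := List.pairwise_iff_getElem.1 h2 i j (hget i) (hget j) hij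
      exact ⟨x, hx, y, hy, hE x (hlt' i x hx) y (hlt' j y hy) hxy⟩
    intro i j hij
    rcases lt_or_gt_of_ne hij with h | h
    · obtain ⟨x, hx, y, hy, hxy⟩ := key i j h
      exact ⟨_, ⟨x, hx, rfl⟩, _, ⟨y, hy, rfl⟩, hxy⟩
    · obtain ⟨x, hx, y, hy, hxy⟩ := key j i h
      exact ⟨_, ⟨y, hy, rfl⟩, _, ⟨x, hx, rfl⟩, hR _ _ hxy⟩

/-- One more edge. -/
def AddR {V : Type*} (R : V → V → Prop) (x y : V) : V → V → Prop := fun a b =>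
  R a b ∨ (a = x ∧ b = y) ∨ (a = y ∧ b = x)

theorem core {V : Type*} (G : SimpleGraph V) (N : Finset V) (h5 : 5 ≤ N.card) (h7 : N.card ≤ 7)
    (hdeg : ∀ x ∈ N, 4 ≤ (N.filter (G.Adj x)).card) :
    Mod5 G.Adj N ∨ (6 ≤ N.card ∧
      (∀ x ∈ N, ∀ y ∈ N, G.Adj x y → ∀ z ∈ N, G.Adj x z → G.Adj y z →
        ∀ w ∈ N, G.Adj x w → G.Adj y w → z ≠ w →
          ¬ G.Adj z w ∧ ∀ u ∈ N, G.Adj x u → G.Adj y u → u = z ∨ u = w) ∧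
      (∀ x ∈ N, ∀ y ∈ N, x ≠ y → ¬ G.Adj x y → Mod5 (AddR G.Adj x y) N)) := by
  set n := N.card with hn
  obtain ⟨v0, hv0⟩ : N.Nonempty := by rw [← Finset.card_pos]; omega
  obtain ⟨l', hnd, hmem', hg⟩ := exists_greedy (fun a b => ¬ G.Adj a b) _ (N.erase v0) v0 rfl (by simp)
  set l := v0 :: l' with hl
  have hmem : ∀ x, x ∈ l ↔ x ∈ N := by
    intro x
    rw [hl, List.mem_cons, hmem', Finset.mem_erase]
    constructor
    · rintro (rfl | h)
      · exact hv0
      · exact h.2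
    · intro h
      by_cases hx : x = v0
      · exact Or.inl hx
      · exact Or.inr ⟨hx, h⟩
  have hlN : l.toFinset = N := by ext x; simp [hmem]
  have hlen : l.length = n := by
    rw [hn, ← hlN, List.toFinset_card_of_nodup hnd]
  set σ : ℕ → V := fun i => l.getD i v0 with hσdef
  have hσget : ∀ i (hi : i < n), σ i = l[i]'(by omega) := fun i hi => by
    simp only [hσdef]
    rw [List.getD_eq_getElem]
  have hσ : ∀ i < n, σ i ∈ N := fun i hi => by
    rw [← hmem, hσget i hi]; exact List.getElem_mem _
  have hinj : ∀ i < n, ∀ j < n, σ i = σ j → i = j := fun i hi j hj h => by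
    rw [hσget i hi, hσget j hj] at h
    exact (List.Nodup.getElem_inj_iff hnd).1 h
  have hsurj : ∀ x ∈ N, ∃ i < n, σ i = x := fun x hx => by
    obtain ⟨i, hi, h⟩ := List.getElem_of_mem ((hmem x).2 hx)
    exact ⟨i, by omega, by rw [hσget i (by omega)]; exact h⟩
  set E : ℕ → ℕ → Bool := fun i j => decide (G.Adj (σ i) (σ j)) with hE
  -- rows of non-neighbours
  have hrow : ∀ i, ∃ r, i < n → r ∈ LOf n ∧ ∀ j, Nat.testBit r j =
      decide (j ∈ (Finset.range n).filter (fun j => j ≠ i ∧ ¬ G.Adj (σ i) (σ j))) := by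
    intro i
    by_cases hi : i < n
    swap
    · exact ⟨0, fun h => absurd h hi⟩
    obtain ⟨r, hr1, hr2⟩ := exists_row h5 h7
      ((Finset.range n).filter (fun j => j ≠ i ∧ ¬ G.Adj (σ i) (σ j)))
      (by intro x hx; simp at hx; omega) (by
        have h1 : (((Finset.range n).filter (fun j => j ≠ i ∧ ¬ G.Adj (σ i) (σ j))).image σ) ⊆
            (N.erase (σ i)) \ (N.filter (G.Adj (σ i))) := by
          intro x hx
          simp only [Finset.mem_image, Finset.mem_filter, Finset.mem_range] at hx
          obtain ⟨j, ⟨hj, hji, hadj⟩, rfl⟩ := hx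
          simp only [Finset.mem_sdiff, Finset.mem_erase, Finset.mem_filter, not_and]
          exact ⟨⟨fun h => hji (hinj j hj i hi h), hσ j hj⟩, fun _ => hadj⟩
        have h2 := Finset.card_le_card h1
        rw [Finset.card_image_of_injOn] at h2
        · rw [Finset.card_sdiff_of_subset] at h2
          · rw [Finset.card_erase_of_mem (hσ i hi)] at h2
            have := hdeg _ (hσ i hi)
            omega
          · intro x hx
            simp only [Finset.mem_filter] at hx
            exact Finset.mem_erase.2 ⟨hx.2.ne', hx.1⟩
        · intro a ha b hb hab
          simp at ha hb
          exact hinj a ha.1 b hb.1 hab)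
    exact ⟨r, fun _ => ⟨hr1, hr2⟩⟩
  choose row hrow using hrow
  have hbit : ∀ i < n, ∀ j < n, Nat.testBit (row i) j = decide (j ≠ i ∧ ¬ G.Adj (σ i) (σ j)) := by
    intro i hi j hj
    rw [(hrow i hi).2 j]
    simp [hj]
  have hbit' : ∀ i < n, ∀ j, n ≤ j → Nat.testBit (row i) j = false := by
    intro i hi j hj
    rw [(hrow i hi).2 j]
    simp
    omega
  have hsym : ∀ k < n, ∀ j < n, Nat.testBit (row j) k = Nat.testBit (row k) j := by
    intro k hk j hj
    rw [hbit k hk j hj, hbit j hj k hk]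
    simp [G.adj_comm, eq_comm]
  have hcand : ∀ k < n, cand (List.range n) k (row k) = true := by
    intro k hk
    simp only [cand, Bool.and_eq_true, Bool.or_eq_true, List.all_eq_true, List.mem_range]
    refine ⟨?_, ?_⟩
    · rw [hbit k hk k hk]; simp
    · by_cases hall : ∃ j, k < j ∧ j < n ∧ ¬ G.Adj (σ k) (σ j)
      · left
        obtain ⟨j, hj1, hj2, hj3⟩ := hall
        have := greedy_getD _ v0 l hg k j hj1 (by omega) hj3
        rw [hbit k hk (k + 1) (by omega)]
        exact decide_eq_true ⟨by omega, this⟩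
      · right
        intro j hj
        push Not at hall
        by_cases hjk : k < j
        · right
          rw [hbit k hk j hj]
          simp [hall j hjk hj]
        · left
          have : Nat.blt k j = false := by
            rw [← Bool.not_eq_true, Nat.blt_eq]; exact hjk
          simp [this]
  have hmain := search_sound (List.range n) (msOf n) row n hsym n 0
    (cands (List.range n) (LOf n)) (by simp) (by simp [cands]) (by
      intro i l hi
      rw [cands, List.getElem?_map, Option.map_eq_some_iff] at hi
      obtain ⟨a, ha, rfl⟩ := hi
      obtain ⟨ha1, ha2⟩ := List.getElem?_eq_some_iff.1 ha
      rw [List.length_range] at ha1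
      rw [List.getElem_range] at ha2
      subst ha2
      rw [zero_add]
      exact mem_fil _ _ _ (hrow i ha1).1 (hcand i ha1)) (searchN h5 h7)
  set F := rowsE ((List.range n).map row) with hF
  have hFE : ∀ i < n, ∀ j < n, (F i j = true ↔ G.Adj (σ i) (σ j)) := by
    intro i hi j hj
    simp only [hF, rowsE]
    rw [getD_range_map row n i hi, hbit i hi j hj]
    have hb : Nat.beq i j = decide (i = j) := by
      by_cases h : i = j
      · simp [h]
      · rw [decide_eq_false h, ← Bool.not_eq_true, Nat.beq_eq]; exact h
    rw [hb]
    by_cases h : i = j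
    · simp [h]
    · have : j ≠ i := fun h' => h h'.symm
      simp [h, this]
  rw [Bool.or_eq_true] at hmain
  rcases hmain with hmain | hmain
  · left
    obtain ⟨bl, hbl, hk⟩ := List.any_eq_true.1 hmain
    obtain ⟨w1, w2, w3⟩ := ms_wf h5 h7 bl hbl
    exact mod5_of_k5 G.Adj (fun x y h => h.symm) N n σ hσ hinj F
      (fun i hi j hj h => (hFE i hi j hj).1 h) bl w1 w2 w3 hk
  · right
    simp only [goodE, Bool.and_eq_true, List.all_eq_true, List.mem_range, List.length_range,
      Nat.blt_eq] at hmain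
    obtain ⟨hg1, hg2⟩ := hmain
    refine ⟨hg1, ?_, ?_⟩
    · intro x hx y hy hxy z hz hxz hyz w hw hxw hyw hzw
      obtain ⟨x, hx', rfl⟩ := hsurj x hx
      obtain ⟨y, hy', rfl⟩ := hsurj y hy
      obtain ⟨z, hz', rfl⟩ := hsurj z hz
      obtain ⟨w, hw', rfl⟩ := hsurj w hw
      have := hg2 x hx' y hy'
      rw [if_pos ((hFE x hx' y hy').2 hxy), List.all_eq_true] at this
      have := this z (List.mem_range.2 hz')
      rw [(hFE x hx' z hz').2 hxz, (hFE y hy' z hz').2 hyz] at this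
      simp only [Bool.and_self, Bool.not_true, Bool.false_or, List.all_eq_true] at this
      have := this w (List.mem_range.2 hw')
      rw [(hFE x hx' w hw').2 hxw, (hFE y hy' w hw').2 hyw] at this
      have hb : Nat.beq z w = false := by
        rw [← Bool.not_eq_true, Nat.beq_eq]; intro h; exact hzw (by rw [h])
      rw [hb] at this
      simp only [Bool.and_self, Bool.not_true, Bool.false_or, Bool.and_eq_true,
        List.all_eq_true, List.mem_range] at this
      refine ⟨fun h => ?_, ?_⟩
      · rw [(hFE z hz' w hw').2 h] at this
        simp at this
      · intro u hu hxu hyu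
        obtain ⟨u, hu', rfl⟩ := hsurj u hu
        have := this.2 u hu'
        rw [(hFE x hx' u hu').2 hxu, (hFE y hy' u hu').2 hyu] at this
        simp only [Bool.and_self, Bool.not_true, Bool.false_or, Bool.or_eq_true, Nat.beq_eq] at this
        rcases this with h | h
        · exact Or.inl (by rw [h])
        · exact Or.inr (by rw [h])
    · intro x hx y hy hne hxy
      obtain ⟨x, hx', rfl⟩ := hsurj x hx
      obtain ⟨y, hy', rfl⟩ := hsurj y hy
      have := hg2 x hx' y hy'
      rw [if_neg (fun h => hxy ((hFE x hx' y hy').1 h)), Bool.or_eq_true, Nat.beq_eq] at this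
      rcases this with h | h
      · exact absurd (by rw [h]) hne
      · obtain ⟨bl, hbl, hk⟩ := List.any_eq_true.1 h
        obtain ⟨w1, w2, w3⟩ := ms_wf h5 h7 bl hbl
        refine mod5_of_k5 (AddR G.Adj (σ x) (σ y)) ?_ N n σ hσ hinj _ ?_ bl w1 w2 w3 hk
        · rintro a b (h | ⟨h1, h2⟩ | ⟨h1, h2⟩)
          · exact Or.inl h.symm
          · exact Or.inr (Or.inr ⟨h2, h1⟩)
          · exact Or.inr (Or.inl ⟨h2, h1⟩)
        · intro i hi j hj h
          simp only [addE, Bool.or_eq_true, Bool.and_eq_true, Nat.beq_eq] at h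
          rcases h with (h | ⟨h1, h2⟩) | ⟨h1, h2⟩
          · exact Or.inl ((hFE i hi j hj).1 h)
          · exact Or.inr (Or.inl ⟨by rw [h1], by rw [h2]⟩)
          · exact Or.inr (Or.inr ⟨by rw [h1], by rw [h2]⟩)

end KrMinor
namespace KrMinor

/-! ### Minors -/

/-- Connectedness of a set of vertices. -/
def Conn {V : Type*} (G : SimpleGraph V) (B : Set V) : Prop :=
  ∀ x ∈ B, ∀ y ∈ B, Relation.ReflTransGen (fun a b => G.Adj a b ∧ a ∈ B ∧ b ∈ B) x y

theorem connected_induce_iff {V : Type*} (G : SimpleGraph V) (B : Set V) :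
    (G.induce B).Connected ↔ B.Nonempty ∧ Conn G B := by
  constructor
  · intro h
    refine ⟨Set.nonempty_coe_sort.1 h.nonempty, ?_⟩
    intro x hx y hy
    have h1 := h.preconnected ⟨x, hx⟩ ⟨y, hy⟩
    rw [SimpleGraph.reachable_iff_reflTransGen] at h1
    have := Relation.ReflTransGen.lift (p := fun a b => G.Adj a b ∧ a ∈ B ∧ b ∈ B)
      (Subtype.val : B → V) (fun a b hab => ⟨hab, a.2, b.2⟩) _ _ h1
    exact this
  · rintro ⟨hne, hc⟩
    have : Nonempty B := hne.to_subtype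
    refine ⟨?_⟩
    rintro ⟨x, hx⟩ ⟨y, hy⟩
    have key : ∀ z, Relation.ReflTransGen (fun a b => G.Adj a b ∧ a ∈ B ∧ b ∈ B) x z →
        ∃ hz : z ∈ B, (G.induce B).Reachable ⟨x, hx⟩ ⟨z, hz⟩ := by
      intro z hz
      induction hz with
      | refl => exact ⟨hx, SimpleGraph.Reachable.refl _⟩
      | tail _ hbc ih =>
        obtain ⟨hb, hr⟩ := ih
        refine ⟨hbc.2.2, hr.trans (SimpleGraph.Adj.reachable ?_)⟩
        exact hbc.1
    exact (key y (hc x hx y hy)).2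

theorem conn_singleton {V : Type*} (G : SimpleGraph V) (a : V) : Conn G {a} := by
  intro x hx y hy
  rw [Set.mem_singleton_iff] at hx hy
  subst hx; subst hy
  exact Relation.ReflTransGen.refl

theorem Conn.mono_rel {V : Type*} {G : SimpleGraph V} {B B' : Set V} (h : B ⊆ B') {x y : V}
    (hxy : Relation.ReflTransGen (fun a b => G.Adj a b ∧ a ∈ B ∧ b ∈ B) x y) :
    Relation.ReflTransGen (fun a b => G.Adj a b ∧ a ∈ B' ∧ b ∈ B') x y :=
  Relation.ReflTransGen.mono (fun _ _ hab => ⟨hab.1, h hab.2.1, h hab.2.2⟩) _ _ hxy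

theorem conn_insert {V : Type*} {G : SimpleGraph V} {C : Set V} (hC : Conn G C) {x c : V}
    (hc : c ∈ C) (hxc : G.Adj x c) : Conn G (insert x C) := by
  have h1 : ∀ y ∈ C, Relation.ReflTransGen
      (fun a b => G.Adj a b ∧ a ∈ insert x C ∧ b ∈ insert x C) x y := by
    intro y hy
    refine Relation.ReflTransGen.head ⟨hxc, Set.mem_insert _ _, Set.mem_insert_of_mem _ hc⟩ ?_
    exact Conn.mono_rel (Set.subset_insert _ _) (hC c hc y hy)
  have h2 : ∀ y ∈ C, Relation.ReflTransGen
      (fun a b => G.Adj a b ∧ a ∈ insert x C ∧ b ∈ insert x C) y x := by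
    intro y hy
    refine Relation.ReflTransGen.tail (Conn.mono_rel (Set.subset_insert _ _) (hC y hy c hc)) ?_
    exact ⟨hxc.symm, Set.mem_insert_of_mem _ hc, Set.mem_insert _ _⟩
  rintro a (rfl | ha) b (rfl | hb)
  · exact Relation.ReflTransGen.refl
  · exact h1 b hb
  · exact h2 a ha
  · exact Conn.mono_rel (Set.subset_insert _ _) (hC a ha b hb)

theorem minor_pull {V W : Type*} (G : SimpleGraph V) (H : SimpleGraph W) (D : W → Set V)
    (hdis : ∀ a b, a ≠ b → Disjoint (D a) (D b))
    (hconn : ∀ a b, H.Adj a b → (D a).Nonempty ∧ Conn G (D a))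
    (hadj : ∀ a b, H.Adj a b → ∃ x ∈ D a, ∃ y ∈ D b, G.Adj x y)
    (r : ℕ) (hr : 2 ≤ r) (h : HasMinor H (⊤ : SimpleGraph (Fin r))) :
    HasMinor G (⊤ : SimpleGraph (Fin r)) := by
  obtain ⟨B, hB1, hB2, hB3, hB4⟩ := h
  have hcB : ∀ i, Conn H (B i) := fun i => ((connected_induce_iff H (B i)).1 (hB3 i)).2
  have hiso : ∀ i, ∀ w ∈ B i, ∃ w', H.Adj w w' := by
    intro i w hw
    have : Nontrivial (Fin r) := Fin.nontrivial_iff_two_le.2 hr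
    obtain ⟨j, hj⟩ := exists_ne i
    obtain ⟨x, hx, y, hy, hxy⟩ := hB4 i j (by simpa using hj.symm)
    rcases Relation.ReflTransGen.cases_head (hcB i w hw x hx) with h | ⟨c, hc, _⟩
    · exact ⟨y, h ▸ hxy⟩
    · exact ⟨c, hc.1⟩
  have hne : ∀ i, (⋃ w ∈ B i, D w).Nonempty := by
    intro i
    obtain ⟨w, hw⟩ := hB1 i
    obtain ⟨w', hw'⟩ := hiso i w hw
    obtain ⟨x, hx⟩ := (hconn w w' hw').1
    exact ⟨x, Set.mem_biUnion hw hx⟩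
  refine ⟨fun i => ⋃ w ∈ B i, D w, hne, ?_, ?_, ?_⟩
  · intro i j hij
    rw [Set.disjoint_left]
    intro x hx hx'
    simp only [Set.mem_iUnion, exists_prop] at hx hx'
    obtain ⟨a, ha, hxa⟩ := hx
    obtain ⟨b, hb, hxb⟩ := hx'
    have hab : a ≠ b := by
      rintro rfl
      exact Set.disjoint_left.1 (hB2 i j hij) ha hb
    exact Set.disjoint_left.1 (hdis a b hab) hxa hxb
  · intro i
    rw [connected_induce_iff]
    refine ⟨hne i, ?_⟩
    intro x hx y hy
    simp only [Set.mem_iUnion, exists_prop] at hx hy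
    obtain ⟨a, ha, hxa⟩ := hx
    obtain ⟨b, hb, hyb⟩ := hy
    have hsub : ∀ w ∈ B i, D w ⊆ ⋃ w ∈ B i, D w := fun w hw => Set.subset_biUnion_of_mem hw
    have key : ∀ b, Relation.ReflTransGen (fun p q => H.Adj p q ∧ p ∈ B i ∧ q ∈ B i) a b →
        ∀ y ∈ D b, Relation.ReflTransGen
          (fun p q => G.Adj p q ∧ p ∈ (⋃ w ∈ B i, D w) ∧ q ∈ ⋃ w ∈ B i, D w) x y := by
      intro b hab
      induction hab with
      | refl =>
        intro y hy
        obtain ⟨w', hw'⟩ := hiso i a ha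
        exact Conn.mono_rel (hsub a ha) ((hconn a w' hw').2 x hxa y hy)
      | tail _ hbc ih =>
        intro y hy
        obtain ⟨p, hp, q, hq, hpq⟩ := hadj _ _ hbc.1
        refine ((ih p hp).tail ⟨hpq, hsub _ hbc.2.1 hp, hsub _ hbc.2.2 hq⟩).trans ?_
        exact Conn.mono_rel (hsub _ hbc.2.2) ((hconn _ _ hbc.1.symm).2 q hq y hy)
    exact key b (hcB i a ha b hb) y hyb
  · intro i j hij
    obtain ⟨a, ha, b, hb, hab⟩ := hB4 i j hij
    obtain ⟨x, hx, y, hy, hxy⟩ := hadj a b hab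
    exact ⟨x, Set.mem_biUnion ha hx, y, Set.mem_biUnion hb hy, hxy⟩

theorem minor_mono {V : Type*} {G H : SimpleGraph V} (hle : H ≤ G) (r : ℕ) (hr : 2 ≤ r)
    (h : HasMinor H (⊤ : SimpleGraph (Fin r))) : HasMinor G (⊤ : SimpleGraph (Fin r)) := by
  refine minor_pull G H (fun a => {a}) ?_ ?_ ?_ r hr h
  · intro a b hab
    simpa using hab
  · intro a b _
    exact ⟨Set.singleton_nonempty a, conn_singleton G a⟩
  · intro a b hab
    exact ⟨a, rfl, b, rfl, hle hab⟩

/-- Contraction of the edge `u v`; the vertex `v` becomes isolated. -/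
def contr {V : Type*} (G : SimpleGraph V) (u v : V) : SimpleGraph V where
  Adj a b := a ≠ b ∧ a ≠ v ∧ b ≠ v ∧ (G.Adj a b ∨ (a = u ∧ G.Adj v b) ∨ (b = u ∧ G.Adj v a))
  symm := ⟨by
    rintro a b ⟨h1, h2, h3, h4⟩
    refine ⟨h1.symm, h3, h2, ?_⟩
    rcases h4 with h | h | h
    · exact Or.inl h.symm
    · exact Or.inr (Or.inr h)
    · exact Or.inr (Or.inl h)⟩
  loopless := ⟨fun a h => h.1 rfl⟩

theorem minor_contr {V : Type*} {G : SimpleGraph V} {u v : V} (huv : G.Adj u v) (r : ℕ)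
    (hr : 2 ≤ r) (h : HasMinor (contr G u v) (⊤ : SimpleGraph (Fin r))) :
    HasMinor G (⊤ : SimpleGraph (Fin r)) := by
  refine minor_pull G (contr G u v)
    (fun a => {x | a ≠ v ∧ (x = a ∨ (a = u ∧ x = v))}) ?_ ?_ ?_ r hr h
  · intro a b hab
    rw [Set.disjoint_left]
    rintro x ⟨ha, hx⟩ ⟨hb, hy⟩
    rcases hx with rfl | ⟨rfl, rfl⟩ <;> rcases hy with h | ⟨h1, h2⟩
    · exact hab h
    · exact ha h2
    · exact hb h.symm
    · exact hab h1.symm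
  · intro a b hab
    refine ⟨⟨a, hab.2.1, Or.inl rfl⟩, ?_⟩
    by_cases hau : a = u
    · have : {x | a ≠ v ∧ (x = a ∨ (a = u ∧ x = v))} = insert u {v} := by
        ext x
        simp only [Set.mem_ofPred_eq, Set.mem_insert_iff, Set.mem_singleton_iff]
        constructor
        · rintro ⟨_, h | h⟩
          · exact Or.inl (h.trans hau)
          · exact Or.inr h.2
        · rintro (h | h)
          · exact ⟨hab.2.1, Or.inl (h.trans hau.symm)⟩
          · exact ⟨hab.2.1, Or.inr ⟨hau, h⟩⟩
      rw [this]
      exact conn_insert (conn_singleton G v) rfl huv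
    · have : {x | a ≠ v ∧ (x = a ∨ (a = u ∧ x = v))} = {a} := by
        ext x
        simp only [Set.mem_ofPred_eq, Set.mem_singleton_iff]
        constructor
        · rintro ⟨_, h | h⟩
          · exact h
          · exact absurd h.1 hau
        · intro h
          exact ⟨hab.2.1, Or.inl h⟩
      rw [this]
      exact conn_singleton G a
  · rintro a b ⟨h1, h2, h3, h4 | ⟨h4, h5⟩ | ⟨h4, h5⟩⟩
    · exact ⟨a, ⟨h2, Or.inl rfl⟩, b, ⟨h3, Or.inl rfl⟩, h4⟩
    · exact ⟨v, ⟨h2, Or.inr ⟨h4, rfl⟩⟩, b, ⟨h3, Or.inl rfl⟩, h5⟩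
    · exact ⟨a, ⟨h2, Or.inl rfl⟩, v, ⟨h3, Or.inr ⟨h4, rfl⟩⟩, h5.symm⟩

theorem minor_of_mod5 {V : Type*} (G : SimpleGraph V) (N : Finset V) (v : V)
    (hv : ∀ x ∈ N, G.Adj v x) (h : Mod5 G.Adj N) : HasMinor G (⊤ : SimpleGraph (Fin 6)) := by
  obtain ⟨B, hB1, hB2, hB3, hB4⟩ := h
  have hne : ∀ i, (B i).Nonempty := by
    intro i
    obtain ⟨j, hj⟩ := exists_ne i
    obtain ⟨x, hx, _⟩ := hB4 i j hj.symm
    exact ⟨x, hx⟩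
  have hvN : v ∉ N := fun h => G.loopless.irrefl v (hv v h)
  refine ⟨Fin.cons {v} B, ?_, ?_, ?_, ?_⟩
  · intro i
    refine Fin.cases ?_ (fun i => ?_) i
    · exact Set.singleton_nonempty v
    · simpa using hne i
  · intro i j
    refine Fin.cases ?_ (fun i => ?_) i <;> refine Fin.cases ?_ (fun j => ?_) j
    · intro h; exact absurd rfl h
    · intro _
      simp only [Fin.cons_zero, Fin.cons_succ, Set.disjoint_singleton_left]
      exact fun h => hvN (hB1 j v h)
    · intro _
      simp only [Fin.cons_zero, Fin.cons_succ, Set.disjoint_singleton_right]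
      exact fun h => hvN (hB1 i v h)
    · intro h
      simp only [Fin.cons_succ]
      exact hB2 i j (fun h' => h (by rw [h']))
  · intro i
    rw [connected_induce_iff]
    refine Fin.cases ?_ (fun i => ?_) i
    · exact ⟨Set.singleton_nonempty v, conn_singleton G v⟩
    · simp only [Fin.cons_succ]
      refine ⟨hne i, ?_⟩
      intro x hx y hy
      by_cases hxy : x = y
      · rw [hxy]
      · exact Relation.ReflTransGen.single ⟨hB3 i x hx y hy hxy, hx, hy⟩
  · intro i j
    refine Fin.cases ?_ (fun i => ?_) i <;> refine Fin.cases ?_ (fun j => ?_) j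
    · intro h; exact absurd rfl h.ne
    · intro _
      obtain ⟨x, hx⟩ := hne j
      exact ⟨v, rfl, x, by simpa using hx, hv x (hB1 j x hx)⟩
    · intro _
      obtain ⟨x, hx⟩ := hne i
      exact ⟨x, by simpa using hx, v, rfl, (hv x (hB1 i x hx)).symm⟩
    · intro h
      simp only [Fin.cons_succ]
      exact hB4 i j (fun h' => h.ne (by rw [h']))

/-- A connected set outside `N[v]` cannot see two vertices of `N` whose joining gives a `K_5`
model. -/
theorem minor_of_mod5_add {V : Type*} (G : SimpleGraph V) (N : Finset V) (v : V)
    (hv : ∀ x ∈ N, G.Adj v x) (C : Set V) (hC : Conn G C) (hCN : ∀ c ∈ C, c ∉ N ∧ c ≠ v)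
    (x y : V) (hx : x ∈ N) (hy : y ∈ N) (hne : x ≠ y)
    (hxC : ∃ c ∈ C, G.Adj x c) (hyC : ∃ c ∈ C, G.Adj y c)
    (h : Mod5 (AddR G.Adj x y) N) : HasMinor G (⊤ : SimpleGraph (Fin 6)) := by
  have hvN : v ∉ N := fun h => G.loopless.irrefl v (hv v h)
  let H : SimpleGraph V :=
    { Adj := fun a b => (a ∈ N ∨ a = v) ∧ (b ∈ N ∨ b = v) ∧ AddR G.Adj x y a b
      symm := ⟨by
        rintro a b ⟨h1, h2, h3⟩
        refine ⟨h2, h1, ?_⟩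
        rcases h3 with h | h | h
        · exact Or.inl h.symm
        · exact Or.inr (Or.inr ⟨h.2, h.1⟩)
        · exact Or.inr (Or.inl ⟨h.2, h.1⟩)⟩
      loopless := ⟨by
        rintro a ⟨h1, h2, h3⟩
        rcases h3 with h | h | h
        · exact h.ne rfl
        · exact hne (h.1.symm.trans h.2)
        · exact hne (h.2.symm.trans h.1)⟩ }
  have h6 : HasMinor H (⊤ : SimpleGraph (Fin 6)) := by
    refine minor_of_mod5 H N v ?_ ?_
    · intro z hz
      exact ⟨Or.inr rfl, Or.inl hz, Or.inl (hv z hz)⟩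
    · obtain ⟨B, hB1, hB2, hB3, hB4⟩ := h
      refine ⟨B, hB1, hB2, ?_, ?_⟩
      · intro i a ha b hb hab
        exact ⟨Or.inl (hB1 i a ha), Or.inl (hB1 i b hb), hB3 i a ha b hb hab⟩
      · intro i j hij
        obtain ⟨a, ha, b, hb, hab⟩ := hB4 i j hij
        exact ⟨a, ha, b, hb, Or.inl (hB1 i a ha), Or.inl (hB1 j b hb), hab⟩
  obtain ⟨c, hc, hxc⟩ := hxC
  obtain ⟨c', hc', hyc'⟩ := hyC
  have hmem : ∀ a, (a ∈ N ∨ a = v) → a ∉ C := by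
    rintro a (h | h) ha
    · exact (hCN a ha).1 h
    · exact (hCN a ha).2 h
  refine minor_pull G H
    (fun a => {z | (a ∈ N ∨ a = v) ∧ (z = a ∨ (a = x ∧ z ∈ C))}) ?_ ?_ ?_ 6 (by norm_num) h6
  · intro a b hab
    rw [Set.disjoint_left]
    rintro z ⟨ha, hz⟩ ⟨hb, hz'⟩
    rcases hz with rfl | ⟨h1, h2⟩ <;> rcases hz' with h3 | ⟨h3, h4⟩
    · exact hab h3
    · exact hmem _ ha h4
    · subst h3; exact hmem _ hb h2
    · exact hab (h1.trans h3.symm)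
  · intro a b hab
    refine ⟨⟨a, hab.1, Or.inl rfl⟩, ?_⟩
    by_cases hax : a = x
    · have : {z | (a ∈ N ∨ a = v) ∧ (z = a ∨ (a = x ∧ z ∈ C))} = insert x C := by
        ext z
        simp only [Set.mem_ofPred_eq, Set.mem_insert_iff]
        constructor
        · rintro ⟨_, h | h⟩
          · exact Or.inl (h.trans hax)
          · exact Or.inr h.2
        · rintro (h | h)
          · exact ⟨hab.1, Or.inl (h.trans hax.symm)⟩
          · exact ⟨hab.1, Or.inr ⟨hax, h⟩⟩
      rw [this]
      exact conn_insert hC hc hxc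
    · have : {z | (a ∈ N ∨ a = v) ∧ (z = a ∨ (a = x ∧ z ∈ C))} = {a} := by
        ext z
        simp only [Set.mem_ofPred_eq, Set.mem_singleton_iff]
        constructor
        · rintro ⟨_, h | h⟩
          · exact h
          · exact absurd h.1 hax
        · intro h
          exact ⟨hab.1, Or.inl h⟩
      rw [this]
      exact conn_singleton G a
  · rintro a b ⟨h1, h2, h3 | ⟨h3, h4⟩ | ⟨h3, h4⟩⟩
    · exact ⟨a, ⟨h1, Or.inl rfl⟩, b, ⟨h2, Or.inl rfl⟩, h3⟩
    · exact ⟨c', ⟨h1, Or.inr ⟨h3, hc'⟩⟩, b, ⟨h2, Or.inl rfl⟩, h4 ▸ hyc'.symm⟩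
    · exact ⟨a, ⟨h1, Or.inl rfl⟩, c', ⟨h2, Or.inr ⟨h4, hc'⟩⟩, h3 ▸ hyc'⟩

end KrMinor
namespace KrMinor

/-! ### Edges in few triangles -/

section comp

variable {V : Type*}

/-- The part of `U` reachable from `z` inside `U`. -/
def comp (G : SimpleGraph V) (U : Set V) (z : V) : Set V :=
  {w | Relation.ReflTransGen (fun a b => G.Adj a b ∧ a ∈ U ∧ b ∈ U) z w}

theorem mem_comp_self (G : SimpleGraph V) (U : Set V) (z : V) : z ∈ comp G U z :=
  Relation.ReflTransGen.refl

theorem comp_subset {G : SimpleGraph V} {U : Set V} {z : V} (hz : z ∈ U) : comp G U z ⊆ U := by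
  intro w hw
  rcases Relation.ReflTransGen.cases_tail hw with h | ⟨c, _, hc⟩
  · exact h ▸ hz
  · exact hc.2.2

theorem comp_closed {G : SimpleGraph V} {U : Set V} {z a b : V} (ha : a ∈ comp G U z)
    (haU : a ∈ U) (hb : b ∈ U) (hab : G.Adj a b) : b ∈ comp G U z :=
  Relation.ReflTransGen.tail ha ⟨hab, haU, hb⟩

theorem rtg_symm {G : SimpleGraph V} {U : Set V} {x y : V}
    (h : Relation.ReflTransGen (fun a b => G.Adj a b ∧ a ∈ U ∧ b ∈ U) x y) :
    Relation.ReflTransGen (fun a b => G.Adj a b ∧ a ∈ U ∧ b ∈ U) y x := by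
  induction h with
  | refl => exact Relation.ReflTransGen.refl
  | tail _ hbc ih => exact Relation.ReflTransGen.head ⟨hbc.1.symm, hbc.2.2, hbc.2.1⟩ ih

theorem conn_comp (G : SimpleGraph V) (U : Set V) (z : V) : Conn G (comp G U z) := by
  have key : ∀ x ∈ comp G U z, Relation.ReflTransGen
      (fun a b => G.Adj a b ∧ a ∈ comp G U z ∧ b ∈ comp G U z) z x := by
    intro x hx
    have hx' : Relation.ReflTransGen (fun a b => G.Adj a b ∧ a ∈ U ∧ b ∈ U) z x := hx
    induction hx' with
    | refl => exact Relation.ReflTransGen.refl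
    | tail hzb hbc ih => exact (ih hzb).tail ⟨hbc.1, hzb, hx⟩
  intro x hx y hy
  exact (rtg_symm (key x hx)).trans (key y hy)

end comp

section tri

variable {V : Type*} [Fintype V]

/-- Neighbourhood. -/
noncomputable def nb (G : SimpleGraph V) (x : V) : Finset V := Finset.univ.filter (G.Adj x)

/-- Common neighbours. -/
noncomputable def cn (G : SimpleGraph V) (x y : V) : Finset V :=
  Finset.univ.filter fun z => G.Adj x z ∧ G.Adj y z

theorem mem_nb {G : SimpleGraph V} {x y : V} : y ∈ nb G x ↔ G.Adj x y := by simp [nb]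

theorem mem_cn {G : SimpleGraph V} {x y z : V} : z ∈ cn G x y ↔ G.Adj x z ∧ G.Adj y z := by
  simp [cn]

/-- All edges live on `S`. -/
def Supp (G : SimpleGraph V) (S : Finset V) : Prop := ∀ x y, G.Adj x y → x ∈ S

/-- Low edges exist outside small cliques. -/
def TP (V : Type*) [Fintype V] (n : ℕ) : Prop :=
  ∀ (G : SimpleGraph V) (S K : Finset V), S.card = n → Supp G S → K ⊆ S →
    (∀ x ∈ K, ∀ y ∈ K, x ≠ y → G.Adj x y) → K.card ≤ 3 →
    ¬ HasMinor G (⊤ : SimpleGraph (Fin 6)) → (∃ x y, G.Adj x y ∧ ¬ (x ∈ K ∧ y ∈ K)) →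
    ∃ x y, G.Adj x y ∧ ¬ (x ∈ K ∧ y ∈ K) ∧ (cn G x y).card ≤ 3

/-- The number of darts. -/
noncomputable def darts (G : SimpleGraph V) : ℕ := ∑ x, (nb G x).card

/-- Mader's bound. -/
def BP (V : Type*) [Fintype V] (n : ℕ) : Prop :=
  ∀ (G : SimpleGraph V) (S : Finset V), S.card = n → Supp G S →
    ¬ HasMinor G (⊤ : SimpleGraph (Fin 6)) → 4 ≤ n → darts G + 20 ≤ 8 * n

theorem step (G : SimpleGraph V) (S K : Finset V) (hS : Supp G S)
    (h6 : ¬ HasMinor G (⊤ : SimpleGraph (Fin 6)))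
    (hK : ∀ x ∈ K, ∀ y ∈ K, x ≠ y → G.Adj x y) (hK3 : K.card ≤ 3)
    (hT : ∀ m < S.card, TP V m) (v : V) (hvK : v ∉ K) (hpos : ∃ w, G.Adj v w)
    (h7 : (nb G v).card ≤ 7)
    (hall : ∀ x y, G.Adj x y → ¬ (x ∈ K ∧ y ∈ K) → 4 ≤ (cn G x y).card) : False := by
  set N := nb G v with hN
  have hv : ∀ x ∈ N, G.Adj v x := fun x hx => mem_nb.1 hx
  have hvN : v ∉ N := fun h => (hv v h).ne rfl
  have hdeg : ∀ x ∈ N, 4 ≤ (N.filter (G.Adj x)).card := by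
    intro x hx
    have h := hall v x (hv x hx) (fun h => hvK h.1)
    refine h.trans (Finset.card_le_card ?_)
    intro z hz
    rw [mem_cn] at hz
    exact Finset.mem_filter.2 ⟨mem_nb.2 hz.1, hz.2⟩
  have h5 : 5 ≤ N.card := by
    obtain ⟨w, hw⟩ := hpos
    have hwN : w ∈ N := mem_nb.2 hw
    have h1 : N.filter (G.Adj w) ⊆ N.erase w := by
      intro z hz
      rw [Finset.mem_filter] at hz
      exact Finset.mem_erase.2 ⟨hz.2.ne', hz.1⟩
    have h2 := Finset.card_le_card h1
    rw [Finset.card_erase_of_mem hwN] at h2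
    have := hdeg w hwN
    omega
  rcases core G N h5 h7 hdeg with hm | ⟨hN6, h2, h3⟩
  · exact h6 (minor_of_mod5 G N v hv hm)
  set U : Set V := {x | x ∉ N ∧ x ≠ v} with hU
  have hno : ∀ z ∈ U, ∀ x ∈ N, ∀ y ∈ N, x ≠ y → (∃ c ∈ comp G U z, G.Adj x c) →
      (∃ c ∈ comp G U z, G.Adj y c) → G.Adj x y := by
    intro z hz x hx y hy hxy hxc hyc
    by_contra hadj
    exact h6 (minor_of_mod5_add G N v hv (comp G U z) (conn_comp G U z)
      (fun c hc => comp_subset hz hc) x y hx hy hxy hxc hyc (h3 x hx y hy hxy hadj))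
  have hclq : ∀ Q : Finset V, Q ⊆ N → (∀ x ∈ Q, ∀ y ∈ Q, x ≠ y → G.Adj x y) → Q.card ≤ 3 := by
    intro Q hQN hQ
    by_contra hcard
    push Not at hcard
    obtain ⟨a, ha⟩ : Q.Nonempty := by rw [← Finset.card_pos]; omega
    have hc1 : (Q.erase a).card = Q.card - 1 := Finset.card_erase_of_mem ha
    obtain ⟨b, hb⟩ : (Q.erase a).Nonempty := by rw [← Finset.card_pos]; omega
    have hc2 : ((Q.erase a).erase b).card = (Q.erase a).card - 1 := Finset.card_erase_of_mem hb
    obtain ⟨c, hc, d, hd, hcd⟩ := Finset.one_lt_card.1 (show 1 < ((Q.erase a).erase b).card by omega)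
    simp only [Finset.mem_erase] at hb hc hd
    obtain ⟨hba, hbQ⟩ := hb
    obtain ⟨hcb, hca, hcQ⟩ := hc
    obtain ⟨hdb, hda, hdQ⟩ := hd
    exact (h2 a (hQN ha) b (hQN hbQ) (hQ a ha b hbQ hba.symm) c (hQN hcQ)
      (hQ a ha c hcQ hca.symm) (hQ b hbQ c hcQ hcb.symm) d (hQN hdQ)
      (hQ a ha d hdQ hda.symm) (hQ b hbQ d hdQ hdb.symm) hcd).1 (hQ c hcQ d hdQ hcd)
  have hvS : v ∈ S := by
    obtain ⟨w, hw⟩ := hpos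
    exact hS v w hw
  by_cases hA : ∃ z ∈ U, (∃ w, G.Adj z w) ∧ ∀ k ∈ K, k ∉ comp G U z
  · obtain ⟨z, hzU, ⟨w, hzw⟩, hzK⟩ := hA
    set C : Finset V := Finset.univ.filter (fun x => x ∈ comp G U z) with hC
    set K' : Finset V := N.filter (fun x => ∃ c ∈ comp G U z, G.Adj x c) with hK'
    set S' : Finset V := C ∪ K' with hS'
    have hmC : ∀ x, x ∈ C ↔ x ∈ comp G U z := fun x => by simp [hC]
    have hCU : ∀ x ∈ C, x ∈ U := fun x hx => comp_subset hzU ((hmC x).1 hx)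
    have hclosed : ∀ x ∈ C, ∀ y, G.Adj x y → y ∈ S' := by
      intro x hx y hxy
      have hxU := hCU x hx
      by_cases hyN : y ∈ N
      · refine Finset.mem_union_right _ (Finset.mem_filter.2 ⟨hyN, x, (hmC x).1 hx, hxy.symm⟩)
      · have hyv : y ≠ v := by
          rintro rfl
          exact hxU.1 (mem_nb.2 hxy.symm)
        exact Finset.mem_union_left _ ((hmC y).2 (comp_closed ((hmC x).1 hx) hxU ⟨hyN, hyv⟩ hxy))
    let G' : SimpleGraph V :=
      { Adj := fun a b => G.Adj a b ∧ a ∈ S' ∧ b ∈ S'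
        symm := ⟨fun a b h => ⟨h.1.symm, h.2.2, h.2.1⟩⟩
        loopless := ⟨fun a h => h.1.ne rfl⟩ }
    have hK'clq : ∀ x ∈ K', ∀ y ∈ K', x ≠ y → G.Adj x y := by
      intro x hx y hy hxy
      rw [hK', Finset.mem_filter] at hx hy
      exact hno z hzU x hx.1 y hy.1 hxy hx.2 hy.2
    have hlt : S'.card < S.card := by
      refine Finset.card_lt_card (Finset.ssubset_iff_subset_ne.2 ⟨?_, ?_⟩)
      · intro x hx
        rcases Finset.mem_union.1 hx with h | h
        · rcases Relation.ReflTransGen.cases_tail ((hmC x).1 h) with h | ⟨c, _, hc⟩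
          · exact h ▸ hS z w hzw
          · exact hS x c hc.1.symm
        · rw [hK', Finset.mem_filter] at h
          obtain ⟨_, c, _, hc⟩ := h
          exact hS x c hc
      · intro h
        rw [← h] at hvS
        rcases Finset.mem_union.1 hvS with h | h
        · exact (hCU v h).2 rfl
        · rw [hK', Finset.mem_filter] at h
          exact hvN h.1
    have hzC : z ∈ C := (hmC z).2 (mem_comp_self G U z)
    obtain ⟨x, y, hxy, hnK, hcn⟩ := hT S'.card hlt G' S' K' rfl (fun x y h => h.2.1)
      Finset.subset_union_right
      (fun x hx y hy hxy => ⟨hK'clq x hx y hy hxy, Finset.mem_union_right _ hx,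
        Finset.mem_union_right _ hy⟩)
      (hclq K' (Finset.filter_subset _ _) hK'clq)
      (fun h => h6 (minor_mono (G := G) (H := G') (fun a b hab => hab.1) 6 (by norm_num) h))
      ⟨z, w, ⟨hzw, Finset.mem_union_left _ hzC, hclosed z hzC w hzw⟩, fun h => by
        have := h.1
        rw [hK', Finset.mem_filter] at this
        exact hzU.1 this.1⟩
    have hxyC : x ∈ C ∨ y ∈ C := by
      by_contra hcon
      push Not at hcon
      exact hnK ⟨(Finset.mem_union.1 hxy.2.1).resolve_left hcon.1,
        (Finset.mem_union.1 hxy.2.2).resolve_left hcon.2⟩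
    have h4 := hall x y hxy.1 (by
      rintro ⟨hx, hy⟩
      rcases hxyC with h | h
      · exact hzK x hx ((hmC x).1 h)
      · exact hzK y hy ((hmC y).1 h))
    have hsub : cn G x y ⊆ cn G' x y := by
      intro t ht
      rw [mem_cn] at ht ⊢
      have htS : t ∈ S' := by
        rcases hxyC with h | h
        · exact hclosed x h t ht.1
        · exact hclosed y h t ht.2
      exact ⟨⟨ht.1, hxy.2.1, htS⟩, ⟨ht.2, hxy.2.2, htS⟩⟩
    have := Finset.card_le_card hsub
    omega
  · push Not at hA
    set K' : Finset V := N.filter (fun x => ∃ z ∈ U, G.Adj x z) with hK'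
    have hK'clq : ∀ x ∈ K', ∀ y ∈ K', x ≠ y → G.Adj x y := by
      intro x hx y hy hxy
      rw [hK', Finset.mem_filter] at hx hy
      obtain ⟨hxN, z1, hz1, hxz1⟩ := hx
      obtain ⟨hyN, z2, hz2, hyz2⟩ := hy
      obtain ⟨k1, hk1, hk1'⟩ := hA z1 hz1 ⟨x, hxz1.symm⟩
      obtain ⟨k2, hk2, hk2'⟩ := hA z2 hz2 ⟨y, hyz2.symm⟩
      have hk2z1 : k2 ∈ comp G U z1 := by
        by_cases h : k1 = k2
        · exact h ▸ hk1'
        · exact comp_closed hk1' (comp_subset hz1 hk1') (comp_subset hz2 hk2') (hK k1 hk1 k2 hk2 h)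
      have hz2z1 : z2 ∈ comp G U z1 := Relation.ReflTransGen.trans hk2z1 (rtg_symm hk2')
      exact hno z1 hz1 x hxN y hyN hxy ⟨z1, mem_comp_self G U z1, hxz1⟩ ⟨z2, hz2z1, hyz2⟩
    have hK'3 := hclq K' (Finset.filter_subset _ _) hK'clq
    obtain ⟨x, hxN, hxK'⟩ : ∃ x ∈ N, x ∉ K' := Finset.exists_mem_notMem_of_card_lt_card (by omega)
    obtain ⟨y, hyN, hxy, hyK⟩ : ∃ y ∈ N, G.Adj x y ∧ ¬ (x ∈ K ∧ y ∈ K) := by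
      have hd := hdeg x hxN
      obtain ⟨y, hy, hyK⟩ : ∃ y ∈ N.filter (G.Adj x), y ∉ K :=
        Finset.exists_mem_notMem_of_card_lt_card (by omega)
      rw [Finset.mem_filter] at hy
      exact ⟨y, hy.1, hy.2, fun h => hyK h.2⟩
    have h4 := hall x y hxy hyK
    have hsub : cn G x y ⊆ insert v (N.filter (fun t => G.Adj x t ∧ G.Adj y t)) := by
      intro t ht
      rw [mem_cn] at ht
      rw [Finset.mem_insert, Finset.mem_filter]
      by_cases htv : t = v
      · exact Or.inl htv
      · by_cases htN : t ∈ N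
        · exact Or.inr ⟨htN, ht⟩
        · exact absurd (Finset.mem_filter.2 ⟨hxN, t, ⟨htN, htv⟩, ht.1⟩) hxK'
    have hc := (Finset.card_le_card hsub).trans (Finset.card_insert_le _ _)
    obtain ⟨p, q, s, hp, hq, hs, hpq, hps, hqs⟩ := Finset.two_lt_card_iff.1
      (show 2 < (N.filter (fun t => G.Adj x t ∧ G.Adj y t)).card by omega)
    rw [Finset.mem_filter] at hp hq hs
    rcases (h2 x hxN y hyN hxy p hp.1 hp.2.1 hp.2.2 q hq.1 hq.2.1 hq.2.2 hpq).2 s hs.1 hs.2.1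
      hs.2.2 with h | h
    · exact hps h.symm
    · exact hqs h.symm

theorem darts_eq_sum {G : SimpleGraph V} {S : Finset V} (hS : Supp G S) :
    darts G = ∑ x ∈ S, (nb G x).card := by
  symm
  refine Finset.sum_subset (Finset.subset_univ S) ?_
  intro x _ hx
  rw [Finset.card_eq_zero, Finset.eq_empty_iff_forall_notMem]
  intro y hy
  exact hx (hS x y (mem_nb.1 hy))

theorem darts_contr (G : SimpleGraph V) {u v : V} (huv : G.Adj u v) :
    darts G ≤ darts (contr G u v) + 2 + 2 * (cn G u v).card := by
  have hsplit : ∀ f : V → ℕ, ∑ x, f x = f u + (f v + ∑ x ∈ (Finset.univ.erase u).erase v, f x) := by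
    intro f
    rw [← Finset.add_sum_erase Finset.univ f (Finset.mem_univ u),
      ← Finset.add_sum_erase (Finset.univ.erase u) f
        (Finset.mem_erase.2 ⟨huv.ne', Finset.mem_univ v⟩)]
  have h1 : (nb G u).card + (nb G v).card ≤ (nb (contr G u v) u).card + 2 + (cn G u v).card := by
    have e1 : (nb G u ∪ nb G v).card + (nb G u ∩ nb G v).card = (nb G u).card + (nb G v).card :=
      Finset.card_union_add_card_inter _ _
    have e2 : nb G u ∩ nb G v = cn G u v := by
      ext x; simp [mem_nb, mem_cn]
    have e3 : nb G u ∪ nb G v ⊆ nb (contr G u v) u ∪ {u, v} := by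
      intro x hx
      simp only [Finset.mem_union, mem_nb, Finset.mem_insert, Finset.mem_singleton] at hx ⊢
      by_cases hxu : x = u
      · exact Or.inr (Or.inl hxu)
      by_cases hxv : x = v
      · exact Or.inr (Or.inr hxv)
      left
      refine ⟨fun h => hxu h.symm, huv.ne, hxv, ?_⟩
      rcases hx with h | h
      · exact Or.inl h
      · exact Or.inr (Or.inl ⟨rfl, h⟩)
    have e4 := (Finset.card_le_card e3).trans (Finset.card_union_le _ _)
    have e5 : ({u, v} : Finset V).card ≤ 2 := Finset.card_le_two
    rw [e2] at e1
    omega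
  have h2 : ∑ x ∈ (Finset.univ.erase u).erase v, (nb G x).card ≤
      ∑ x ∈ (Finset.univ.erase u).erase v, (nb (contr G u v) x).card + (cn G u v).card := by
    have e1 : ∀ x ∈ (Finset.univ.erase u).erase v, (nb G x).card ≤
        (nb (contr G u v) x).card + if x ∈ cn G u v then 1 else 0 := by
      intro x hx
      simp only [Finset.mem_erase, Finset.mem_univ, and_true] at hx
      obtain ⟨hxv, hxu⟩ := hx
      split_ifs with hc
      · rw [mem_cn] at hc
        have : nb G x ⊆ insert v (nb (contr G u v) x) := by
          intro y hy
          rw [mem_nb] at hy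
          rw [Finset.mem_insert, mem_nb]
          by_cases hyv : y = v
          · exact Or.inl hyv
          · exact Or.inr ⟨hy.ne, hxv, hyv, Or.inl hy⟩
        exact (Finset.card_le_card this).trans (Finset.card_insert_le _ _)
      · rw [add_zero]
        by_cases hvx : G.Adj v x
        · have hux : ¬ G.Adj u x := fun h => hc (mem_cn.2 ⟨h, hvx⟩)
          have : nb G x ⊆ insert v ((nb (contr G u v) x).erase u) := by
            intro y hy
            rw [mem_nb] at hy
            rw [Finset.mem_insert, Finset.mem_erase, mem_nb]
            by_cases hyv : y = v
            · exact Or.inl hyv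
            · refine Or.inr ⟨?_, hy.ne, hxv, hyv, Or.inl hy⟩
              rintro rfl
              exact hux hy.symm
          have h1 := (Finset.card_le_card this).trans (Finset.card_insert_le _ _)
          have hu : u ∈ nb (contr G u v) x :=
            mem_nb.2 ⟨hxu, hxv, huv.ne, Or.inr (Or.inr ⟨rfl, hvx⟩)⟩
          have h2 := Finset.card_erase_of_mem hu
          have h3 : 0 < (nb (contr G u v) x).card := Finset.card_pos.2 ⟨u, hu⟩
          omega
        · refine Finset.card_le_card ?_
          intro y hy
          rw [mem_nb] at hy ⊢
          refine ⟨hy.ne, hxv, ?_, Or.inl hy⟩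
          rintro rfl
          exact hvx hy.symm
    refine (Finset.sum_le_sum e1).trans ?_
    rw [Finset.sum_add_distrib]
    refine Nat.add_le_add_left ?_ _
    rw [← Finset.sum_filter, Finset.sum_const, smul_eq_mul, mul_one]
    refine Finset.card_le_card ?_
    intro x hx
    exact (Finset.mem_filter.1 hx).2
  unfold darts
  rw [hsplit, hsplit (fun x => (nb (contr G u v) x).card)]
  omega

/-- Deletion of an edge. -/
def del (G : SimpleGraph V) (a b : V) : SimpleGraph V where
  Adj x y := G.Adj x y ∧ ¬ (x = a ∧ y = b) ∧ ¬ (x = b ∧ y = a)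
  symm := ⟨fun x y h => ⟨h.1.symm, fun h' => h.2.2 ⟨h'.2, h'.1⟩, fun h' => h.2.1 ⟨h'.2, h'.1⟩⟩⟩
  loopless := ⟨fun a h => h.1.ne rfl⟩

theorem darts_del (G : SimpleGraph V) {a b : V} (hab : G.Adj a b) :
    darts G ≤ darts (del G a b) + 2 ∧ darts (del G a b) < darts G := by
  constructor
  · have e1 : ∀ x ∈ Finset.univ, (nb G x).card ≤ (nb (del G a b) x).card +
        ((if x = a then 1 else 0) + (if x = b then 1 else 0)) := by
      intro x _
      by_cases hxa : x = a
      · have hxb : x ≠ b := hxa ▸ hab.ne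
        rw [if_pos hxa, if_neg hxb]
        have : nb G x ⊆ insert b (nb (del G a b) x) := by
          intro y hy
          rw [mem_nb] at hy
          rw [Finset.mem_insert, mem_nb]
          by_cases hyb : y = b
          · exact Or.inl hyb
          · exact Or.inr ⟨hy, fun h => hyb h.2, fun h => hxb h.1⟩
        exact (Finset.card_le_card this).trans (Finset.card_insert_le _ _)
      · by_cases hxb : x = b
        · rw [if_neg hxa, if_pos hxb]
          have : nb G x ⊆ insert a (nb (del G a b) x) := by
            intro y hy
            rw [mem_nb] at hy
            rw [Finset.mem_insert, mem_nb]
            by_cases hya : y = a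
            · exact Or.inl hya
            · exact Or.inr ⟨hy, fun h => hxa h.1, fun h => hya h.2⟩
          exact (Finset.card_le_card this).trans (Finset.card_insert_le _ _)
        · rw [if_neg hxa, if_neg hxb]
          refine Finset.card_le_card ?_
          intro y hy
          rw [mem_nb] at hy ⊢
          exact ⟨hy, fun h => hxa h.1, fun h => hxb h.1⟩
    have := Finset.sum_le_sum e1
    rw [Finset.sum_add_distrib, Finset.sum_add_distrib, Finset.sum_ite_eq', Finset.sum_ite_eq'] at this
    simpa [darts] using this
  · refine Finset.sum_lt_sum ?_ ⟨a, Finset.mem_univ a, ?_⟩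
    · intro x _
      refine Finset.card_le_card ?_
      intro y hy
      exact mem_nb.2 (mem_nb.1 hy).1
    · refine Finset.card_lt_card (Finset.ssubset_iff_subset_ne.2 ⟨?_, ?_⟩)
      · intro y hy
        exact mem_nb.2 (mem_nb.1 hy).1
      · intro h
        have : b ∈ nb G a := mem_nb.2 hab
        rw [← h, mem_nb] at this
        exact this.2.1 ⟨rfl, rfl⟩

theorem bp_of (n : ℕ) (hB : ∀ m < n, BP V m) (hT : ∀ m < n, TP V m) : BP V n := by
  have key : ∀ (k : ℕ) (G : SimpleGraph V) (S : Finset V), darts G = k → S.card = n → Supp G S →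
      ¬ HasMinor G (⊤ : SimpleGraph (Fin 6)) → 4 ≤ n → darts G + 20 ≤ 8 * n := by
    intro k
    induction k using Nat.strong_induction_on with
    | _ k ih =>
    intro G S hk hSn hS h6 hn
    by_contra hcon
    push Not at hcon
    have hbound : darts G ≤ n * (n - 1) := by
      rw [darts_eq_sum hS]
      have : ∀ x ∈ S, (nb G x).card ≤ n - 1 := by
        intro x hx
        rw [← hSn, ← Finset.card_erase_of_mem hx]
        refine Finset.card_le_card ?_
        intro y hy
        rw [mem_nb] at hy
        exact Finset.mem_erase.2 ⟨hy.ne', hS y x hy.symm⟩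
      have := Finset.sum_le_card_nsmul S _ _ this
      rwa [hSn, smul_eq_mul] at this
    have hn6 : 6 ≤ n := by
      by_contra h
      obtain rfl | rfl : n = 4 ∨ n = 5 := by omega
      · omega
      · omega
    by_cases hbig : 8 * n ≤ darts G + 17
    · have hpos : 0 < darts G := by omega
      obtain ⟨a, b, hab⟩ : ∃ a b, G.Adj a b := by
        by_contra hno
        push Not at hno
        have : darts G = 0 := by
          refine Finset.sum_eq_zero ?_
          intro x _
          rw [Finset.card_eq_zero, Finset.eq_empty_iff_forall_notMem]
          intro y hy
          exact hno x y (mem_nb.1 hy)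
        omega
      obtain ⟨d1, d2⟩ := darts_del G hab
      have := ih (darts (del G a b)) (by omega) (del G a b) S rfl hSn (fun x y h => hS x y h.1)
        (fun h => h6 (minor_mono (G := G) (H := del G a b) (fun x y h => h.1) 6 (by norm_num) h)) hn
      omega
    · push Not at hbig
      have hiso : ∀ x ∈ S, ∃ y, G.Adj x y := by
        intro x hx
        by_contra hno
        push Not at hno
        have := hB (n - 1) (by omega) G (S.erase x) (by rw [Finset.card_erase_of_mem hx, hSn])
          (fun a b hab => Finset.mem_erase.2 ⟨by rintro rfl; exact hno b hab, hS a b hab⟩) h6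
          (by omega)
        omega
      obtain ⟨v, hvS, hv7⟩ : ∃ v ∈ S, (nb G v).card ≤ 7 := by
        by_contra hno
        push Not at hno
        have := Finset.card_nsmul_le_sum S (fun x => (nb G x).card) 8 (fun x hx => hno x hx)
        rw [← darts_eq_sum hS, hSn, smul_eq_mul] at this
        omega
      by_cases hall : ∀ x y, G.Adj x y → 4 ≤ (cn G x y).card
      · exact step G S ∅ hS h6 (by simp) (by simp) (by rwa [hSn]) v (by simp) (hiso v hvS) hv7
          (fun x y hxy _ => hall x y hxy)
      · push Not at hall
        obtain ⟨x, y, hxy, hc⟩ := hall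
        have hd := darts_contr G hxy
        have := hB (n - 1) (by omega) (contr G x y) (S.erase y)
          (by rw [Finset.card_erase_of_mem (hS y x hxy.symm), hSn])
          (by
            rintro a b ⟨h1, h2, h3, h4 | h4 | h4⟩
            · exact Finset.mem_erase.2 ⟨h2, hS a b h4⟩
            · exact Finset.mem_erase.2 ⟨h2, h4.1 ▸ hS x y hxy⟩
            · exact Finset.mem_erase.2 ⟨h2, hS a y h4.2.symm⟩)
          (fun h => h6 (minor_contr hxy 6 (by norm_num) h)) (by omega)
        omega
  intro G S hSn hS h6 hn
  exact key _ G S rfl hSn hS h6 hn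

theorem tp_of (n : ℕ) (hB : BP V n) (hT : ∀ m < n, TP V m) : TP V n := by
  intro G S K hSn hS hKS hK hK3 h6 hex
  by_contra hcon
  push Not at hcon
  have hall : ∀ x y, G.Adj x y → ¬ (x ∈ K ∧ y ∈ K) → 4 ≤ (cn G x y).card := by
    intro x y hxy hn
    exact hcon x y hxy (fun h1 h2 => hn ⟨h1, h2⟩)
  have hiso : ∀ x ∈ S, x ∉ K → ∃ y, G.Adj x y := by
    intro x hx hxK
    by_contra hno
    push Not at hno
    have hpos : 0 < n := by rw [← hSn]; exact Finset.card_pos.2 ⟨x, hx⟩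
    obtain ⟨a, b, hab, hn, hc⟩ := hT (n - 1) (by omega) G (S.erase x) K
      (by rw [Finset.card_erase_of_mem hx, hSn])
      (fun a b hab => Finset.mem_erase.2 ⟨by rintro rfl; exact hno b hab, hS a b hab⟩)
      (fun k hk => Finset.mem_erase.2 ⟨by rintro rfl; exact hxK hk, hKS hk⟩) hK hK3 h6 hex
    have := hall a b hab hn
    omega
  have hn4 : 4 ≤ n := by
    obtain ⟨x, y, hxy, hn⟩ := hex
    have h := hall x y hxy hn
    refine h.trans ?_
    rw [← hSn]
    refine Finset.card_le_card ?_
    intro z hz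
    exact hS z x (mem_cn.1 hz).1.symm
  have hbd := hB G S hSn hS h6 hn4
  obtain ⟨v, hvS, hvK, hv7⟩ : ∃ v ∈ S, v ∉ K ∧ (nb G v).card ≤ 7 := by
    by_contra hno
    push Not at hno
    have h1 := Finset.card_nsmul_le_sum (S \ K) (fun x => (nb G x).card) 8
      (fun x hx => hno x (Finset.mem_sdiff.1 hx).1 (Finset.mem_sdiff.1 hx).2)
    have h2 := Finset.card_nsmul_le_sum K (fun x => (nb G x).card) (K.card - 1) (by
      intro x hx
      rw [← Finset.card_erase_of_mem hx]
      refine Finset.card_le_card ?_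
      intro y hy
      rw [Finset.mem_erase] at hy
      exact mem_nb.2 (hK x hx y hy.2 hy.1.symm))
    have h3 := Finset.sum_sdiff (f := fun x => (nb G x).card) hKS
    rw [← darts_eq_sum hS] at h3
    rw [smul_eq_mul] at h1 h2
    have h4 := Finset.card_sdiff_of_subset hKS
    have h5 := Finset.card_le_card hKS
    generalize K.card = k at *
    interval_cases k <;> omega
  exact step G S K hS h6 hK hK3 (by rwa [hSn]) v hvK (hiso v hvS hvK) hv7 hall

theorem tp_all (n : ℕ) : BP V n ∧ TP V n := by
  induction n using Nat.strong_induction_on with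
  | _ n ih =>
  have hB := bp_of n (fun m hm => (ih m hm).1) (fun m hm => (ih m hm).2)
  exact ⟨hB, tp_of n hB (fun m hm => (ih m hm).2)⟩

/-- The graph with `k` apices joined to each other and to all non-isolated vertices. -/
def cone (G : SimpleGraph V) (k : ℕ) : SimpleGraph (V ⊕ Fin k) where
  Adj a b := match a, b with
    | Sum.inl x, Sum.inl y => G.Adj x y
    | Sum.inl x, Sum.inr _ => ∃ z, G.Adj x z
    | Sum.inr _, Sum.inl y => ∃ z, G.Adj y z
    | Sum.inr i, Sum.inr j => i ≠ j
  symm := ⟨by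
    rintro (x | i) (y | j) h
    · exact G.adj_symm h
    · exact h
    · exact h
    · exact fun h' => h h'.symm⟩
  loopless := ⟨by
    rintro (x | i) h
    · exact G.loopless.irrefl x h
    · exact h rfl⟩

theorem minor_of_cone (G : SimpleGraph V) (k r : ℕ)
    (h : HasMinor (cone G k) (⊤ : SimpleGraph (Fin (r + k)))) :
    HasMinor G (⊤ : SimpleGraph (Fin r)) := by
  obtain ⟨B, hB1, hB2, hB3, hB4⟩ := h
  set A : Finset (Fin (r + k)) := Finset.univ.filter (fun i => ∃ a : Fin k, Sum.inr a ∈ B i) with hA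
  have hAc : A.card ≤ k := by
    have hch : ∀ i : A, ∃ a : Fin k, Sum.inr a ∈ B i := fun i => (Finset.mem_filter.1 i.2).2
    choose φ hφ using hch
    have hinj : Function.Injective φ := by
      intro i j hij
      by_contra hne
      have hne' : (i : Fin (r + k)) ≠ j := fun h => hne (Subtype.ext h)
      have h1 := hφ i
      rw [hij] at h1
      exact Set.disjoint_left.1 (hB2 _ _ hne') h1 (hφ j)
    have := Fintype.card_le_of_injective φ hinj
    simpa using this
  have hcc : r ≤ (Aᶜ).card := by
    rw [Finset.card_compl, Fintype.card_fin]
    omega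
  obtain ⟨A', hA', hA'r⟩ := Finset.exists_subset_card_eq hcc
  let ψ : Fin r ≃ A' := (finCongr hA'r.symm).trans A'.equivFin.symm
  have hinl : ∀ i, ∀ x ∈ B (ψ i), ∃ y, x = Sum.inl y := by
    intro i x hx
    rcases x with y | a
    · exact ⟨y, rfl⟩
    · exfalso
      have := hA' (ψ i).2
      rw [Finset.mem_compl] at this
      exact this (Finset.mem_filter.2 ⟨Finset.mem_univ _, a, hx⟩)
  have hψ : ∀ i j, i ≠ j → (ψ i : Fin (r + k)) ≠ ψ j := by
    intro i j hij h
    exact hij (ψ.injective (Subtype.ext h))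
  have hne : ∀ i, (Sum.inl ⁻¹' B (ψ i) : Set V).Nonempty := by
    intro i
    obtain ⟨x, hx⟩ := hB1 (ψ i)
    obtain ⟨y, rfl⟩ := hinl i x hx
    exact ⟨y, hx⟩
  refine ⟨fun i => Sum.inl ⁻¹' B (ψ i), hne, ?_, ?_, ?_⟩
  · intro i j hij
    exact (hB2 _ _ (hψ i j hij)).preimage _
  · intro i
    rw [connected_induce_iff]
    refine ⟨hne i, ?_⟩
    intro x hx y hy
    have hc := ((connected_induce_iff _ _).1 (hB3 (ψ i))).2 (Sum.inl x) hx (Sum.inl y) hy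
    have key : ∀ w, Relation.ReflTransGen
        (fun a b => (cone G k).Adj a b ∧ a ∈ B (ψ i) ∧ b ∈ B (ψ i)) (Sum.inl x) w →
        ∀ y, w = Sum.inl y → Relation.ReflTransGen
        (fun a b => G.Adj a b ∧ a ∈ (Sum.inl ⁻¹' B (ψ i) : Set V) ∧ b ∈ (Sum.inl ⁻¹' B (ψ i) : Set V))
          x y := by
      intro w hw
      induction hw with
      | refl =>
        intro y hy
        rw [Sum.inl.inj hy]
      | tail _ hbc ih =>
        intro y hy
        subst hy
        obtain ⟨b, rfl⟩ := hinl i _ hbc.2.1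
        exact (ih b rfl).tail ⟨hbc.1, hbc.2.1, hbc.2.2⟩
    exact key _ hc y rfl
  · intro i j hij
    obtain ⟨x, hx, y, hy, hxy⟩ := hB4 (ψ i) (ψ j) (by simpa using hψ i j hij.ne)
    obtain ⟨x, rfl⟩ := hinl i x hx
    obtain ⟨y, rfl⟩ := hinl j y hy
    exact ⟨x, hx, y, hy, hxy⟩

/-- A `K_r`-minor free graph with an edge has an edge in at most `r - 3` triangles. -/
theorem exists_low_edge (G : SimpleGraph V) (r : ℕ) (hr3 : 3 ≤ r) (hr6 : r ≤ 6)
    (h : ¬ HasMinor G (⊤ : SimpleGraph (Fin r))) (hex : ∃ x y, G.Adj x y) :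
    ∃ x y, G.Adj x y ∧ (cn G x y).card + 3 ≤ r := by
  obtain ⟨k, hk⟩ : ∃ k, r + k = 6 := ⟨6 - r, by omega⟩
  have h6 : ¬ HasMinor (cone G k) (⊤ : SimpleGraph (Fin 6)) := by
    intro h6
    rw [← hk] at h6
    exact h (minor_of_cone G k r h6)
  set K : Finset (V ⊕ Fin k) := Finset.univ.map ⟨Sum.inr, Sum.inr_injective⟩ with hK
  have hKc : K.card = k := by simp [hK]
  have hmK : ∀ a, a ∈ K ↔ ∃ i : Fin k, a = Sum.inr i := by
    intro a
    simp [hK, eq_comm]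
  obtain ⟨x0, y0, hxy0⟩ := hex
  obtain ⟨a, b, hab, hn, hc⟩ := (tp_all (V := V ⊕ Fin k) _).2 (cone G k) Finset.univ K rfl
    (fun _ _ _ => Finset.mem_univ _) (Finset.subset_univ _)
    (by
      intro x hx y hy hxy
      obtain ⟨i, rfl⟩ := (hmK x).1 hx
      obtain ⟨j, rfl⟩ := (hmK y).1 hy
      exact fun h => hxy (by rw [h]))
    (by omega) h6
    ⟨Sum.inl x0, Sum.inl y0, hxy0, fun h => by
      obtain ⟨i, hi⟩ := (hmK _).1 h.1
      exact absurd hi (by simp)⟩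
  -- the case of an edge at an apex
  have apex : ∀ (x : V) (i : Fin k), (cone G k).Adj (Sum.inl x) (Sum.inr i) →
      (cn (cone G k) (Sum.inl x) (Sum.inr i)).card ≤ 3 →
      ∃ x y, G.Adj x y ∧ (cn G x y).card + 3 ≤ r := by
    intro x i hxi hc
    obtain ⟨z, hxz⟩ : ∃ z, G.Adj x z := hxi
    refine ⟨x, z, hxz, ?_⟩
    have hsub : (nb G x).map ⟨Sum.inl, Sum.inl_injective⟩ ∪
        ((Finset.univ : Finset (Fin k)).erase i).map ⟨Sum.inr, Sum.inr_injective⟩ ⊆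
        cn (cone G k) (Sum.inl x) (Sum.inr i) := by
      intro w hw
      rw [mem_cn]
      simp only [Finset.mem_union, Finset.mem_map, Function.Embedding.coeFn_mk, mem_nb,
        Finset.mem_erase, Finset.mem_univ, and_true] at hw
      rcases hw with ⟨y, hy, rfl⟩ | ⟨j, hj, rfl⟩
      · exact ⟨hy, x, hy.symm⟩
      · exact ⟨⟨z, hxz⟩, fun h => hj h.symm⟩
    have h1 := Finset.card_le_card hsub
    rw [Finset.card_union_of_disjoint, Finset.card_map, Finset.card_map,
      Finset.card_erase_of_mem (Finset.mem_univ i), Finset.card_univ, Fintype.card_fin] at h1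
    · have h2 : cn G x z ⊆ (nb G x).erase z := by
        intro w hw
        rw [mem_cn] at hw
        exact Finset.mem_erase.2 ⟨hw.2.ne', mem_nb.2 hw.1⟩
      have h3 := Finset.card_le_card h2
      rw [Finset.card_erase_of_mem (mem_nb.2 hxz)] at h3
      have h4 : 0 < (nb G x).card := Finset.card_pos.2 ⟨z, mem_nb.2 hxz⟩
      have h5 := i.pos
      omega
    · rw [Finset.disjoint_left]
      intro w hw hw'
      simp only [Finset.mem_map, Function.Embedding.coeFn_mk] at hw hw'
      obtain ⟨y, _, rfl⟩ := hw
      obtain ⟨j, _, hj⟩ := hw'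
      exact absurd hj (by simp)
  rcases a with x | i
  · rcases b with y | j
    · refine ⟨x, y, hab, ?_⟩
      have hxy : G.Adj x y := hab
      have hsub : (cn G x y).map ⟨Sum.inl, Sum.inl_injective⟩ ∪ K ⊆
          cn (cone G k) (Sum.inl x) (Sum.inl y) := by
        intro w hw
        rw [mem_cn]
        simp only [Finset.mem_union, Finset.mem_map, Function.Embedding.coeFn_mk, mem_cn, hmK] at hw
        rcases hw with ⟨z, hz, rfl⟩ | ⟨j, rfl⟩
        · exact ⟨hz.1, hz.2⟩
        · exact ⟨⟨y, hxy⟩, ⟨x, hxy.symm⟩⟩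
      have h1 := Finset.card_le_card hsub
      rw [Finset.card_union_of_disjoint, Finset.card_map, hKc] at h1
      · omega
      · rw [Finset.disjoint_left]
        intro w hw hw'
        simp only [Finset.mem_map, Function.Embedding.coeFn_mk] at hw
        obtain ⟨y, _, rfl⟩ := hw
        obtain ⟨j, hj⟩ := (hmK _).1 hw'
        exact absurd hj (by simp)
    · exact apex x j hab hc
  · rcases b with y | j
    · refine apex y i hab.symm ?_
      refine le_trans (Finset.card_le_card ?_) hc
      intro w hw
      rw [mem_cn] at hw ⊢
      exact hw.symm
    · exact absurd ⟨(hmK _).2 ⟨i, rfl⟩, (hmK _).2 ⟨j, rfl⟩⟩ hn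

end tri

end KrMinor
namespace KrMinor

section stress

/-- Injectivity of a linear family of linear maps is a generic condition. -/
theorem generic_injective {F X Y : Type*} [NormedAddCommGroup F] [NormedSpace ℝ F]
    [FiniteDimensional ℝ F] [NormedAddCommGroup X] [NormedSpace ℝ X] [FiniteDimensional ℝ X]
    [NormedAddCommGroup Y] [NormedSpace ℝ Y] [FiniteDimensional ℝ Y]
    (A : F →ₗ[ℝ] (X →ₗ[ℝ] Y)) :
    IsOpen {f | Function.Injective (A f)} ∧
      ((∃ f0, Function.Injective (A f0)) → Dense {f | Function.Injective (A f)}) := by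
  constructor
  · let T : F →ₗ[ℝ] (X →L[ℝ] Y) :=
      (LinearMap.toContinuousLinearMap : (X →ₗ[ℝ] Y) ≃ₗ[ℝ] (X →L[ℝ] Y)).toLinearMap ∘ₗ A
    have hT : Continuous T := T.continuous_of_finiteDimensional
    exact (ContinuousLinearMap.isOpen_injective (𝕜 := ℝ) (E := X) (F := Y)).preimage hT
  · rintro ⟨f0, h0⟩
    obtain ⟨L, hL⟩ := (A f0).exists_leftInverse_of_injective (LinearMap.ker_eq_bot.2 h0)
    intro f
    let M : Module.End ℝ X := L ∘ₗ A f
    have hfin : Set.Finite {s : ℝ | M.HasEigenvalue (-s)} := by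
      have h1 : Set.Finite {s : ℝ | M.HasEigenvalue s} := Module.End.finite_hasEigenvalue M
      exact h1.preimage (neg_injective.injOn)
    have hgood : ∀ s : ℝ, ¬ M.HasEigenvalue (-s) → Function.Injective (A (f + s • f0)) := by
      intro s hs
      rw [injective_iff_map_eq_zero]
      intro x hx
      by_contra hx0
      apply hs
      refine Module.End.hasEigenvalue_of_hasEigenvector (x := x) ?_
      rw [Module.End.hasEigenvector_iff, Module.End.mem_eigenspace_iff]
      refine ⟨?_, hx0⟩
      have h2 := congrArg L hx
      have h3 : L (A f0 x) = x := by
        have := LinearMap.congr_fun hL x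
        simpa using this
      simp only [map_add, map_smul, LinearMap.add_apply, LinearMap.smul_apply, h3, map_zero] at h2
      change L (A f x) = _
      rw [neg_smul]
      exact eq_neg_of_add_eq_zero_left h2
    have hcl : (0 : ℝ) ∈ closure ({s : ℝ | M.HasEigenvalue (-s)}ᶜ) :=
      hfin.countable.dense_compl ℝ 0
    have hc : Continuous (fun s : ℝ => f + s • f0) := by fun_prop
    have := map_mem_closure (t := {f | Function.Injective (A f)}) hc hcl (fun s hs => hgood s hs)
    simpa using this

variable {V : Type*} [Fintype V]

/-- Symmetric weights supported on the edges. -/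
def wts (G : SimpleGraph V) : Submodule ℝ (V → V → ℝ) where
  carrier := {W | (∀ x y, W x y = W y x) ∧ ∀ x y, ¬ G.Adj x y → W x y = 0}
  add_mem' := by
    rintro a b ⟨h1, h2⟩ ⟨h3, h4⟩
    refine ⟨fun x y => ?_, fun x y h => ?_⟩
    · simp [h1 x y, h3 x y]
    · simp [h2 x y h, h4 x y h]
  zero_mem' := ⟨fun _ _ => rfl, fun _ _ _ => rfl⟩
  smul_mem' := by
    rintro c a ⟨h1, h2⟩
    refine ⟨fun x y => ?_, fun x y h => ?_⟩
    · simp [h1 x y]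
    · simp [h2 x y h]

/-- The stress map. -/
noncomputable def sm (G : SimpleGraph V) (d : ℕ) :
    (V → EuclideanSpace ℝ (Fin d)) →ₗ[ℝ] (wts G →ₗ[ℝ] (V → EuclideanSpace ℝ (Fin d))) :=
  LinearMap.mk₂ ℝ (fun f W x => ∑ y, W.1 x y • (f x - f y))
    (by
      intro f g W
      funext x
      simp only [Pi.add_apply, ← Finset.sum_add_distrib]
      refine Finset.sum_congr rfl fun y _ => ?_
      module)
    (by
      intro c f W
      funext x
      simp only [Pi.smul_apply, Finset.smul_sum]
      refine Finset.sum_congr rfl fun y _ => ?_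
      module)
    (by
      intro f W W'
      funext x
      simp only [Pi.add_apply, ← Finset.sum_add_distrib, Submodule.coe_add]
      refine Finset.sum_congr rfl fun y _ => ?_
      module)
    (by
      intro c f W
      funext x
      simp only [Pi.smul_apply, Finset.smul_sum, Submodule.coe_smul, smul_eq_mul]
      refine Finset.sum_congr rfl fun y _ => ?_
      module)

theorem sm_apply (G : SimpleGraph V) (d : ℕ) (f : V → EuclideanSpace ℝ (Fin d)) (W : wts G)
    (x : V) : sm G d f W x = ∑ y, W.1 x y • (f x - f y) := rfl

theorem stressFree_iff (G : SimpleGraph V) (d : ℕ) (f : V → EuclideanSpace ℝ (Fin d)) :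
    f ∈ StressFreeEmbeddings G d ↔ Function.Injective (sm G d f) := by
  rw [injective_iff_map_eq_zero]
  constructor
  · intro h W hW
    have h1 := h (fun e => Sym2.lift ⟨fun x y => W.1 x y, W.2.1⟩ e.1) (by
      intro v
      have h2 := congrFun hW v
      rw [sm_apply] at h2
      refine Eq.trans (Finset.sum_congr rfl fun u _ => ?_) h2
      by_cases hvu : G.Adj v u
      · simp [hvu]
      · simp [hvu, W.2.2 v u hvu])
    ext x y
    by_cases hxy : G.Adj x y
    · have := congrFun h1 ⟨s(x, y), G.mem_edgeSet.mpr hxy⟩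
      simpa using this
    · simp [W.2.2 x y hxy]
  · intro h w hw
    let W : V → V → ℝ := fun x y => if h : G.Adj x y then w ⟨s(x, y), G.mem_edgeSet.mpr h⟩ else 0
    have hWm : W ∈ wts G := by
      refine ⟨fun x y => ?_, fun x y hxy => by simp [W, hxy]⟩
      by_cases hxy : G.Adj x y
      · have hyx := hxy.symm
        simp only [W, hxy, hyx, dif_pos]
        congr 2
        exact Sym2.eq_swap
      · have hyx : ¬ G.Adj y x := fun h => hxy h.symm
        simp [W, hxy, hyx]
    have h1 := h ⟨W, hWm⟩ (by
      funext v
      rw [sm_apply]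
      refine Eq.trans (Finset.sum_congr rfl fun u _ => ?_) (hw v)
      by_cases hvu : G.Adj v u
      · simp [W, hvu]
      · simp [W, hvu])
    funext e
    obtain ⟨e, he⟩ := e
    induction e with
    | _ x y =>
      have h2 : W x y = 0 := by
        have := congrArg Subtype.val h1
        exact congrFun (congrFun this x) y
      have hxy : G.Adj x y := he
      simpa [W, hxy] using h2

theorem generic_of_one (G : SimpleGraph V) (d : ℕ)
    (h : ∃ f, Function.Injective (sm G d f)) : GenericallyStressFree G d := by
  have hs : StressFreeEmbeddings G d = {f | Function.Injective (sm G d f)} := by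
    ext f
    exact stressFree_iff G d f
  unfold GenericallyStressFree
  rw [hs]
  have := generic_injective (sm G d)
  exact ⟨this.1, this.2 h⟩

/-- The general position map at an edge. -/
noncomputable def gp (d : ℕ) (u v : V) (S : Finset V) :
    (V → EuclideanSpace ℝ (Fin d)) →ₗ[ℝ] ((S → ℝ) →ₗ[ℝ] EuclideanSpace ℝ (Fin d)) :=
  LinearMap.mk₂ ℝ (fun f c => ∑ b : S, c b • (if b.1 = v then f v else f u - f b.1))
    (by
      intro f g W
      simp only [Pi.add_apply, ← Finset.sum_add_distrib]
      refine Finset.sum_congr rfl fun y _ => ?_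
      split_ifs <;> module)
    (by
      intro c f W
      simp only [Pi.smul_apply, Finset.smul_sum]
      refine Finset.sum_congr rfl fun y _ => ?_
      split_ifs <;> module)
    (by
      intro f W W'
      simp only [Pi.add_apply, ← Finset.sum_add_distrib]
      refine Finset.sum_congr rfl fun y _ => ?_
      split_ifs <;> module)
    (by
      intro c f W
      simp only [Pi.smul_apply, Finset.smul_sum, smul_eq_mul]
      refine Finset.sum_congr rfl fun y _ => ?_
      split_ifs <;> module)

theorem gp_apply (d : ℕ) (u v : V) (S : Finset V) (f : V → EuclideanSpace ℝ (Fin d))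
    (c : S → ℝ) : gp d u v S f c = ∑ b : S, c b • (if b.1 = v then f v else f u - f b.1) := rfl

theorem gp_exists (d : ℕ) (u v : V) (S : Finset V) (hu : u ∉ S) (hS : S.card ≤ d) :
    ∃ f, Function.Injective (gp d u v S f) := by
  have hcard : Fintype.card S ≤ Fintype.card (Fin d) := by simpa using hS
  obtain ⟨i⟩ := Function.Embedding.nonempty_of_card_le hcard
  let f : V → EuclideanSpace ℝ (Fin d) := fun x =>
    if h : x ∈ S then (if x = v then (1 : ℝ) else -1) • EuclideanSpace.single (i ⟨x, h⟩) (1 : ℝ) else 0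
  refine ⟨f, ?_⟩
  rw [injective_iff_map_eq_zero]
  intro c hc
  rw [gp_apply] at hc
  have h1 : ∀ b : S, (if b.1 = v then f v else f u - f b.1) = EuclideanSpace.single (i b) (1 : ℝ) := by
    intro b
    by_cases hb : b.1 = v
    · have hv : v ∈ S := hb ▸ b.2
      have : (⟨v, hv⟩ : S) = b := Subtype.ext hb.symm
      simp [f, hb, hv, this]
    · simp [f, hb, hu]
  simp only [h1] at hc
  funext b
  have h2 := congrArg (fun e : EuclideanSpace ℝ (Fin d) => e (i b)) hc
  have h3 : ∀ x : S, c x * (Pi.single (i x) (1 : ℝ) : Fin d → ℝ) (i b) = if x = b then c x else 0 := by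
    intro x
    by_cases hx : x = b
    · simp [hx]
    · have : i b ≠ i x := fun h => hx (i.injective h.symm)
      simp [hx, this]
  simpa [h3] using h2

/-- The matrix of the edge `uv`. -/
noncomputable def eW (u v : V) : V → V → ℝ :=
  fun x y => if (x = u ∧ y = v) ∨ (x = v ∧ y = u) then 1 else 0

theorem eW_mem {G : SimpleGraph V} {u v : V} (h : G.Adj u v) : eW u v ∈ wts G := by
  refine ⟨fun x y => ?_, fun x y hxy => ?_⟩
  · unfold eW
    congr 1
    apply propext
    tauto
  · unfold eW
    rw [if_neg]
    rintro (⟨rfl, rfl⟩ | ⟨rfl, rfl⟩)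
    · exact hxy h
    · exact hxy h.symm

theorem split {G : SimpleGraph V} {u v : V} (huv : G.Adj u v) (d : ℕ)
    (hc : (cn G u v).card + 1 ≤ d) (hg : GenericallyStressFree (contr G u v) d) :
    ∃ f, Function.Injective (sm G d f) := by
  have hne : u ≠ v := huv.ne
  let S := insert v (cn G u v)
  have huS : u ∉ S := by
    simp [S, mem_cn, hne]
  have hScard : S.card ≤ d := le_trans (Finset.card_insert_le _ _) hc
  obtain ⟨gO, gD⟩ := generic_injective (gp d u v S)
  have gD := gD (gp_exists d u v S huS hScard)
  obtain ⟨f', hf1, hf2⟩ := (hg.2.inter_of_isOpen_left gD hg.1).nonempty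
  rw [stressFree_iff] at hf1
  let f : V → EuclideanSpace ℝ (Fin d) := fun x => if x = v then f' u else f' x
  let z := f' v
  have hfv : f v = f u := by simp [f, hne]
  let e : V → EuclideanSpace ℝ (Fin d) := fun x => if x = v then z else if x = u then -z else 0
  let g : V → EuclideanSpace ℝ (Fin d) := fun x => if x = v then z else 0
  let D : wts G →ₗ[ℝ] (V → EuclideanSpace ℝ (Fin d)) :=
    { toFun := fun W => W.1 u v • e
      map_add' := fun W W' => by simp [add_smul]
      map_smul' := fun c W => by simp [mul_smul] }
  have hD : ∀ W, D W = W.1 u v • e := fun W => rfl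
  have hB : Function.Injective (sm G d f + D) := by
    rw [injective_iff_map_eq_zero]
    intro W hW
    have hWx : ∀ x, (∑ y, W.1 x y • (f x - f y)) + W.1 u v • e x = 0 := by
      intro x
      have := congrFun hW x
      simpa [sm_apply, hD] using this
    let W' : V → V → ℝ := fun a b => if a = v ∨ b = v ∨ a = b then 0 else
      W.1 a b + (if a = u then W.1 v b else 0) + (if b = u then W.1 a v else 0)
    have hW'm : W' ∈ wts (contr G u v) := by
      refine ⟨fun a b => ?_, fun a b hab => ?_⟩
      · simp only [W']
        have e1 := W.2.1 a b
        have e2 := W.2.1 v b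
        have e3 := W.2.1 a v
        by_cases h : a = v ∨ b = v ∨ a = b
        · have h' : b = v ∨ a = v ∨ b = a := by tauto
          rw [if_pos h, if_pos h']
        · have h' : ¬ (b = v ∨ a = v ∨ b = a) := by tauto
          rw [if_neg h, if_neg h', e1, e2, e3]
          ring
      · simp only [W']
        by_cases h : a = v ∨ b = v ∨ a = b
        · rw [if_pos h]
        · rw [if_neg h]
          push Not at h
          have hn : ¬ (G.Adj a b ∨ (a = u ∧ G.Adj v b) ∨ (b = u ∧ G.Adj v a)) :=
            fun h' => hab ⟨h.2.2, h.1, h.2.1, h'⟩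
          push Not at hn
          rw [W.2.2 a b hn.1]
          by_cases h1 : a = u
          · by_cases h2 : b = u
            · exact absurd (h1.trans h2.symm) h.2.2
            · simp [h1, h2, W.2.2 v b (hn.2.1 h1)]
          · by_cases h2 : b = u
            · simp [h1, h2, W.2.1 a v, W.2.2 v a (hn.2.2 h2)]
            · simp [h1, h2]
    have hW'0 := (injective_iff_map_eq_zero _).1 hf1 ⟨W', hW'm⟩ (by
      funext x
      rw [sm_apply]
      change ∑ y, W' x y • (f' x - f' y) = 0
      by_cases hxv : x = v
      · exact Finset.sum_eq_zero fun y _ => by simp [W', hxv]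
      by_cases hxu : x = u
      · have h1 := hWx u
        have h2 := hWx v
        have h3 : e u = - e v := by simp [e, hne]
        have h4 : (∑ y, W.1 u y • (f u - f y)) + ∑ y, W.1 v y • (f v - f y) = 0 := by
          rw [h3] at h1
          have := congrArg₂ (· + ·) h1 h2
          simp only [add_zero] at this
          rw [← this]
          module
        rw [← h4, ← Finset.sum_add_distrib, hxu]
        refine Finset.sum_congr rfl fun y _ => ?_
        by_cases hyv : y = v
        · simp [W', hyv, hfv]
        · by_cases hyu : y = u
          · simp [hyu, hfv]
          · have : ¬ (u = v ∨ y = v ∨ u = y) := by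
              push Not
              exact ⟨hne, hyv, fun h => hyu h.symm⟩
            simp only [W', if_neg this, hyu, if_true, if_false, hfv]
            simp only [f, hne, hyv, if_false]
            module
      · have h1 := hWx x
        have h3 : e x = 0 := by simp [e, hxv, hxu]
        rw [h3, smul_zero, add_zero] at h1
        have key : ∀ y, W' x y • (f' x - f' y) = W.1 x y • (f x - f y)
            + ((if y = u then W.1 x v • (f x - f u) else 0)
              - (if y = v then W.1 x v • (f x - f u) else 0)) := by
          intro y
          by_cases hyv : y = v
          · have : ¬ v = u := fun h => hne h.symm
            simp [W', hyv, hfv, this]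
          · by_cases hxy : x = y
            · subst hxy
              simp [hxu, hxv]
            · have : ¬ (x = v ∨ y = v ∨ x = y) := by
                push Not
                exact ⟨hxv, hyv, hxy⟩
              simp only [W', if_neg this, hxu, if_false, hyv]
              by_cases hyu : y = u
              · simp only [hyu, if_true, f, hne, hxv, if_false]
                module
              · simp only [hyu, if_false, f, hxv, hyv]
                module
        simp only [key, Finset.sum_add_distrib, Finset.sum_sub_distrib, h1, Finset.sum_ite_eq',
          Finset.mem_univ, if_true]
        simp)
    have hW' : ∀ a b, W' a b = 0 := by
      intro a b
      have := congrArg Subtype.val hW'0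
      exact congrFun (congrFun this a) b
    have h1 : ∀ b, b ≠ u → b ≠ v → W.1 v b = - W.1 u b := by
      intro b hbu hbv
      have := hW' u b
      have h' : ¬ (u = v ∨ b = v ∨ u = b) := by
        push Not
        exact ⟨hne, hbv, fun h => hbu h.symm⟩
      simp only [W', if_neg h', if_true, hbu, if_false] at this
      linarith
    have hself : ∀ x, W.1 x x = 0 := fun x => W.2.2 x x (G.loopless.irrefl x)
    let c : S → ℝ := fun b => if b.1 = v then - W.1 u v else W.1 u b.1
    have hc0 : c = 0 := by
      refine (injective_iff_map_eq_zero _).1 hf2 c ?_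
      rw [gp_apply]
      have h2 := hWx u
      have h3 : e u = - z := by simp [e, hne]
      rw [h3] at h2
      let F : V → EuclideanSpace ℝ (Fin d) := fun b =>
        (if b = v then - W.1 u v else W.1 u b) • (if b = v then f' v else f' u - f' b)
      have h4 : ∑ b : S, c b • (if b.1 = v then f' v else f' u - f' b.1) = ∑ b ∈ S, F b :=
        Finset.sum_coe_sort S F
      rw [h4]
      have h5 : ∑ b ∈ S, F b = ∑ b, F b := by
        refine Finset.sum_subset (Finset.subset_univ _) ?_
        intro b _ hb
        simp only [S, Finset.mem_insert, mem_cn, not_or] at hb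
        have : W.1 u b = 0 := by
          by_cases hbu : b = u
          · rw [hbu, hself]
          by_cases hub : G.Adj u b
          · have h6 := W.2.2 v b (fun h => hb.2 ⟨hub, h⟩)
            have h7 := h1 b hbu hb.1
            linarith
          · exact W.2.2 u b hub
        simp [F, hb.1, this]
      rw [h5, ← h2]
      have h6 : W.1 u v • -z = ∑ b, (if b = v then W.1 u v • -z else 0) := by simp
      rw [h6, ← Finset.sum_add_distrib]
      refine Finset.sum_congr rfl fun b _ => ?_
      by_cases hb : b = v
      · simp [F, hb, hfv, z]
      · simp [F, hb, f, hne]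
    have huv0 : W.1 u v = 0 := by
      have := congrFun hc0 ⟨v, Finset.mem_insert_self _ _⟩
      simpa [c] using this
    have hub0 : ∀ b, W.1 u b = 0 := by
      intro b
      by_cases hbu : b = u
      · rw [hbu, hself]
      by_cases hbv : b = v
      · rw [hbv, huv0]
      by_cases hub : G.Adj u b
      · by_cases hvb : G.Adj v b
        · have := congrFun hc0 ⟨b, Finset.mem_insert_of_mem (mem_cn.2 ⟨hub, hvb⟩)⟩
          simpa [c, hbv] using this
        · have h6 := W.2.2 v b hvb
          have h7 := h1 b hbu hbv
          linarith
      · exact W.2.2 u b hub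
    have hvb0 : ∀ b, W.1 v b = 0 := by
      intro b
      by_cases hbu : b = u
      · rw [hbu, W.2.1, huv0]
      by_cases hbv : b = v
      · rw [hbv, hself]
      rw [h1 b hbu hbv, hub0, neg_zero]
    ext a b
    change W.1 a b = 0
    by_cases hau : a = u
    · rw [hau, hub0]
    by_cases hav : a = v
    · rw [hav, hvb0]
    by_cases hbu : b = u
    · rw [hbu, W.2.1, hub0]
    by_cases hbv : b = v
    · rw [hbv, W.2.1, hvb0]
    by_cases hab : a = b
    · rw [hab, hself]
    have := hW' a b
    simpa [W', hau, hav, hbu, hbv, hab] using this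
  -- perturbation
  let P : ℝ →ₗ[ℝ] (wts G →ₗ[ℝ] (V → EuclideanSpace ℝ (Fin d))) :=
    LinearMap.toSpanSingleton ℝ _ (sm G d g - D)
  let Q : (ℝ × ℝ) →ₗ[ℝ] (wts G →ₗ[ℝ] (V → EuclideanSpace ℝ (Fin d))) :=
    LinearMap.coprod (LinearMap.toSpanSingleton ℝ _ (sm G d f + D)) P
  have hQ : ∀ s t, Q (s, t) = s • (sm G d f + D) + t • (sm G d g - D) := fun s t => rfl
  have hQo := (generic_injective Q).1
  have hpre : IsOpen {t : ℝ | Function.Injective (Q (1, t))} :=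
    hQo.preimage (f := fun t : ℝ => ((1 : ℝ), t)) (by fun_prop)
  have h0 : (0 : ℝ) ∈ {t : ℝ | Function.Injective (Q (1, t))} := by
    change Function.Injective (Q (1, 0))
    rw [hQ, one_smul, zero_smul, add_zero]
    exact hB
  obtain ⟨t, htn, ht⟩ : ∃ t : ℝ, t ≠ 0 ∧ Function.Injective (Q (1, t)) := by
    have h2 : (0 : ℝ) ∈ closure ({0}ᶜ : Set ℝ) := dense_compl_singleton (0 : ℝ) 0
    obtain ⟨t, ht1, ht2⟩ := mem_closure_iff.1 h2 _ hpre h0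
    exact ⟨t, ht2, ht1⟩
  refine ⟨f + t • g, ?_⟩
  rw [injective_iff_map_eq_zero] at ht ⊢
  intro W hW
  let E : wts G := ⟨eW u v, eW_mem huv⟩
  have hEuv : E.1 u v = 1 := by simp [E, eW]
  have hEu : ∀ y, E.1 u y = if y = v then 1 else 0 := by
    intro y
    simp [E, eW, hne]
  have hEv : ∀ y, E.1 v y = if y = u then 1 else 0 := by
    intro y
    simp [E, eW, hne.symm]
  have hEx : ∀ x y, x ≠ u → x ≠ v → E.1 x y = 0 := by
    intro x y hx hy
    simp [E, eW, hx, hy]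
  have hfE : sm G d f E = 0 := by
    funext x
    rw [sm_apply]
    by_cases hxu : x = u
    · simp [hxu, hEu, hfv]
    by_cases hxv : x = v
    · simp [hxv, hEv, hfv]
    simp [hEx x _ hxu hxv]
  have hgE : sm G d g E = e := by
    funext x
    rw [sm_apply]
    by_cases hxu : x = u
    · simp [hxu, hEu, g, e, hne]
    by_cases hxv : x = v
    · simp [hxv, hEv, g, e, hne]
    simp [hEx x _ hxu hxv, e, hxu, hxv]
  have hDE : D E = e := by rw [hD, hEuv, one_smul]
  have h3 := ht (W + ((t - 1) * W.1 u v) • E) (by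
    rw [hQ]
    simp only [LinearMap.add_apply, LinearMap.smul_apply, LinearMap.sub_apply, map_add, map_smul,
      hfE, hgE, hDE, hD W] at hW ⊢
    refine Eq.trans ?_ hW
    module)
  have h4 : W.1 u v = 0 := by
    have h5 : W.1 u v + ((t - 1) * W.1 u v) * E.1 u v = 0 := by
      have := congrArg Subtype.val h3
      exact congrFun (congrFun this u) v
    rw [hEuv] at h5
    have h6 : t * W.1 u v = 0 := by linarith
    exact (mul_eq_zero.1 h6).resolve_left htn
  rw [h4, mul_zero, zero_smul, add_zero] at h3
  exact h3

theorem noEdge_inj (G : SimpleGraph V) (d : ℕ) (h : ¬ ∃ x y, G.Adj x y) :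
    ∃ f, Function.Injective (sm G d f) := by
  refine ⟨0, ?_⟩
  rw [injective_iff_map_eq_zero]
  intro W _
  ext x y
  exact W.2.2 x y (fun hxy => h ⟨x, y, hxy⟩)

/-- The vertices that are not isolated. -/
noncomputable def act (G : SimpleGraph V) : Finset V := Finset.univ.filter (fun x => ∃ y, G.Adj x y)

theorem act_contr {G : SimpleGraph V} {u v : V} (huv : G.Adj u v) :
    (act (contr G u v)).card < (act G).card := by
  apply Finset.card_lt_card
  rw [Finset.ssubset_iff_of_subset]
  · refine ⟨v, ?_, ?_⟩
    · simp only [act, Finset.mem_filter, Finset.mem_univ, true_and]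
      exact ⟨u, huv.symm⟩
    · simp only [act, Finset.mem_filter, Finset.mem_univ, true_and]
      rintro ⟨y, hy⟩
      exact hy.2.1 rfl
  · intro x
    simp only [act, Finset.mem_filter, Finset.mem_univ, true_and]
    rintro ⟨y, h1, h2, h3, h4⟩
    rcases h4 with h | h | h
    · exact ⟨y, h⟩
    · exact ⟨v, h.1 ▸ huv⟩
    · exact ⟨v, h.2.symm⟩

theorem main_ind (r : ℕ) (hr3 : 3 ≤ r) (hr6 : r ≤ 6) (n : ℕ) : ∀ (G : SimpleGraph V),
    (act G).card = n → ¬ HasMinor G (⊤ : SimpleGraph (Fin r)) →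
    GenericallyStressFree G (r - 2) := by
  induction n using Nat.strong_induction_on with
  | _ n ih =>
    intro G hn h
    apply generic_of_one
    by_cases hex : ∃ x y, G.Adj x y
    · obtain ⟨x, y, hxy, hc⟩ := exists_low_edge G r hr3 hr6 h hex
      refine split hxy (r - 2) (by omega) ?_
      exact ih _ (hn ▸ act_contr hxy) _ rfl (fun hm => h (minor_contr hxy r (by omega) hm))
    · exact noEdge_inj G _ hex

theorem two_minor {G : SimpleGraph V} {x y : V} (h : G.Adj x y) :
    HasMinor G (⊤ : SimpleGraph (Fin 2)) := by
  have hne := h.ne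
  refine ⟨fun i => if i = 0 then {x} else {y}, ?_, ?_, ?_, ?_⟩
  · intro i
    by_cases hi : i = 0 <;> simp [hi]
  · intro i j hij
    fin_cases i <;> fin_cases j <;> simp_all [eq_comm]
  · intro i
    have key : ∀ a : V, (G.induce ({a} : Set V)).Connected := by
      intro a
      rw [SimpleGraph.connected_iff]
      exact ⟨fun p q => by rw [Subsingleton.elim p q], ⟨⟨a, rfl⟩⟩⟩
    fin_cases i
    · exact key x
    · exact key y
  · intro i j hij
    fin_cases i <;> fin_cases j <;> simp_all [SimpleGraph.adj_comm]

end stress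

end KrMinor

/-- For every integer `r` with `2 ≤ r ≤ 6`, every finite simple graph with no
`K_r` minor is generically `(r-2)`-stress free. -/
theorem krMinorFree_genericallyStressFree {V : Type*} [Fintype V] (G : SimpleGraph V)
    (r : ℕ) (hr2 : 2 ≤ r) (hr6 : r ≤ 6)
    (hfree : ¬ HasMinor G (⊤ : SimpleGraph (Fin r))) :
    GenericallyStressFree G (r - 2) := by
  by_cases hr : r = 2
  · subst hr
    apply KrMinor.generic_of_one
    apply KrMinor.noEdge_inj
    rintro ⟨x, y, hxy⟩
    exact hfree (KrMinor.two_minor hxy)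
  · exact KrMinor.main_ind r (by omega) hr6 _ G rfl hfree
end

section
/- Every finite simple graph with no K_5 minor (in particular, every planar graph) is generically 3-stress free. -/
open scoped Classical

/-! ### Combinatorics: contractions and `K₅` minors -/

namespace K5Aux

/-- Contraction of `v` onto `u`, on the same vertex set (`v` becomes isolated). -/
def contr {V : Type*} (G : SimpleGraph V) (u v : V) : SimpleGraph V where
  Adj a b := a ≠ b ∧ a ≠ v ∧ b ≠ v ∧
    (G.Adj a b ∨ (a = u ∧ G.Adj v b) ∨ (b = u ∧ G.Adj v a))
  symm := ⟨by
    rintro a b ⟨h1, h2, h3, h4⟩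
    refine ⟨h1.symm, h3, h2, ?_⟩
    rcases h4 with h | h | h
    · exact Or.inl h.symm
    · exact Or.inr (Or.inr h)
    · exact Or.inr (Or.inl h)⟩
  loopless := ⟨fun a h => h.1 rfl⟩

theorem hasMinor_mono {V W : Type*} {G G' : SimpleGraph V} {H : SimpleGraph W} (h : G' ≤ G)
    (hm : HasMinor G' H) : HasMinor G H := by
  obtain ⟨B, h1, h2, h3, h4⟩ := hm
  refine ⟨B, h1, h2, fun i => ?_, fun i j hij => ?_⟩
  · exact (h3 i).mono (SimpleGraph.comap_monotone _ h)
  · obtain ⟨x, hx, y, hy, hxy⟩ := h4 i j hij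
    exact ⟨x, hx, y, hy, h hxy⟩

theorem hasMinor_contr {V : Type*} {G : SimpleGraph V} {u v : V} (huv : G.Adj u v)
    (hm : HasMinor (contr G u v) (⊤ : SimpleGraph (Fin 5))) :
    HasMinor G (⊤ : SimpleGraph (Fin 5)) := by
  obtain ⟨B, h1, h2, h3, h4⟩ := hm
  have hv : ∀ i, v ∉ B i := by
    intro i hi
    obtain ⟨j, hj⟩ : ∃ j : Fin 5, i ≠ j := ⟨i + 1, by fin_cases i <;> decide⟩
    obtain ⟨x, hx, y, hy, hxy⟩ := h4 i j hj
    have hxv : x ≠ v := hxy.2.1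
    obtain ⟨p⟩ := (h3 i).preconnected ⟨v, hi⟩ ⟨x, hx⟩
    cases p with
    | nil => exact hxv rfl
    | cons h p => exact h.2.1 rfl
  let B' : Fin 5 → Set V := fun i => {z | z ∈ B i ∨ (z = v ∧ u ∈ B i)}
  have hsub : ∀ i, B i ⊆ B' i := fun i z hz => Or.inl hz
  refine ⟨B', fun i => (h1 i).mono (hsub i), ?_, ?_, ?_⟩
  · intro i j hij
    rw [Set.disjoint_left]
    have hd := Set.disjoint_left.mp (h2 i j hij)
    rintro z (hz | ⟨rfl, hz⟩) (hz' | ⟨hzv, hz'⟩)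
    · exact hd hz hz'
    · subst hzv; exact hv _ hz
    · exact hv _ hz'
    · exact hd hz hz'
  · intro i
    have key : ∀ (a b : B i), ((contr G u v).induce (B i)).Reachable a b →
        (G.induce (B' i)).Reachable ⟨a, hsub i a.2⟩ ⟨b, hsub i b.2⟩ := by
      rintro a b ⟨p⟩
      induction p with
      | nil => exact SimpleGraph.Reachable.refl _
      | @cons a b c h p ih =>
        refine SimpleGraph.Reachable.trans ?_ ih
        obtain ⟨-, -, -, h | ⟨rfl, h⟩ | ⟨rfl, h⟩⟩ := h
        · exact SimpleGraph.Adj.reachable (by exact h)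
        · have hvm : v ∈ B' i := Or.inr ⟨rfl, a.2⟩
          have e1 : (G.induce (B' i)).Adj ⟨a, hsub i a.2⟩ ⟨v, hvm⟩ := huv
          have e2 : (G.induce (B' i)).Adj ⟨v, hvm⟩ ⟨b, hsub i b.2⟩ := h
          exact e1.reachable.trans e2.reachable
        · have hvm : v ∈ B' i := Or.inr ⟨rfl, b.2⟩
          have e1 : (G.induce (B' i)).Adj ⟨b, hsub i b.2⟩ ⟨v, hvm⟩ := huv
          have e2 : (G.induce (B' i)).Adj ⟨v, hvm⟩ ⟨a, hsub i a.2⟩ := h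
          exact (e1.reachable.trans e2.reachable).symm
    obtain ⟨x0, hx0⟩ := h1 i
    have all : ∀ z : B' i, (G.induce (B' i)).Reachable ⟨x0, hsub i hx0⟩ z := by
      rintro ⟨z, hz | ⟨rfl, hz⟩⟩
      · exact key ⟨x0, hx0⟩ ⟨z, hz⟩ ((h3 i).preconnected _ _)
      · refine (key ⟨x0, hx0⟩ ⟨u, hz⟩ ((h3 i).preconnected _ _)).trans ?_
        exact SimpleGraph.Adj.reachable (by exact huv)
    have : Nonempty (B' i) := ⟨⟨x0, hsub i hx0⟩⟩
    exact ⟨fun a b => (all a).symm.trans (all b)⟩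
  · intro i j hij
    obtain ⟨x, hx, y, hy, hxy⟩ := h4 i j hij
    obtain ⟨-, -, -, h | ⟨rfl, h⟩ | ⟨rfl, h⟩⟩ := hxy
    · exact ⟨x, hsub i hx, y, hsub j hy, h⟩
    · exact ⟨v, Or.inr ⟨rfl, hx⟩, y, hsub j hy, h⟩
    · exact ⟨x, hsub i hx, v, Or.inr ⟨rfl, hy⟩, h.symm⟩

/-- `K₅` minor with one branch set `{b, c}` and four singletons. -/
theorem k5_of_config {V : Type*} {G : SimpleGraph V} {p a d e b c : V}
    (pa : G.Adj p a) (pd : G.Adj p d) (pe : G.Adj p e) (pb : G.Adj p b) (npc : p ≠ c)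
    (ad : G.Adj a d) (ae : G.Adj a e) (ac : G.Adj a c) (nab : a ≠ b)
    (de : G.Adj d e) (db : G.Adj d b) (ndc : d ≠ c) (eb : G.Adj e b) (nec : e ≠ c)
    (bc : b = c ∨ G.Adj b c) : HasMinor G (⊤ : SimpleGraph (Fin 5)) := by
  have hs : ∀ x : V, (G.induce ({x} : Set V)).Connected := by
    intro x
    have : Nonempty ({x} : Set V) := ⟨⟨x, rfl⟩⟩
    refine ⟨?_⟩
    rintro ⟨y, rfl⟩ ⟨z, rfl⟩
    exact SimpleGraph.Reachable.refl _
  have hbc : (G.induce ({b, c} : Set V)).Connected := by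
    rcases bc with rfl | h
    · rw [Set.pair_eq_singleton]; exact hs b
    · exact SimpleGraph.induce_pair_connected_of_adj h
  let B : Fin 5 → Set V := ![{p}, {a}, {d}, {e}, {b, c}]
  have hlt : ∀ i j : Fin 5, i < j →
      Disjoint (B i) (B j) ∧ ∃ x ∈ B i, ∃ y ∈ B j, G.Adj x y := by
    intro i j hij
    have := pa.ne; have := pd.ne; have := pe.ne; have := pb.ne; have := ad.ne
    have := ae.ne; have := ac.ne; have := de.ne; have := db.ne; have := eb.ne
    fin_cases i <;> fin_cases j <;> first
      | exact absurd hij (by decide)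
      | (simp [B]; tauto)
  refine ⟨B, ?_, ?_, ?_, ?_⟩
  · intro i; fin_cases i <;> simp [B]
  · intro i j hij
    rcases lt_or_gt_of_ne hij with h | h
    · exact (hlt i j h).1
    · exact (hlt j i h).1.symm
  · intro i
    fin_cases i
    · exact hs p
    · exact hs a
    · exact hs d
    · exact hs e
    · exact hbc
  · intro i j hij
    rcases lt_or_gt_of_ne hij.ne with h | h
    · exact (hlt i j h).2
    · obtain ⟨x, hx, y, hy, hxy⟩ := (hlt j i h).2
      exact ⟨y, hy, x, hx, hxy.symm⟩

variable {V : Type*} [Fintype V]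

/-- Common neighbours. -/
noncomputable def cn (G : SimpleGraph V) (a b : V) : Finset V :=
  Finset.univ.filter fun c => G.Adj a c ∧ G.Adj b c

theorem k5_of_low_degree {G : SimpleGraph V} (h3 : ∀ a b, G.Adj a b → 3 ≤ (cn G a b).card)
    {p : V} (h0 : 0 < G.degree p) (h5 : G.degree p ≤ 5) :
    HasMinor G (⊤ : SimpleGraph (Fin 5)) := by
  set N := G.neighborFinset p with hN
  have memN : ∀ x, x ∈ N ↔ G.Adj p x := by intro x; simp [hN]
  have hNcard : N.card ≤ 5 := by simpa [hN] using h5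
  by_cases hc : ∀ a ∈ N, ∀ b ∈ N, a ≠ b → G.Adj a b
  · obtain ⟨a, ha⟩ : N.Nonempty := by
      rw [← Finset.card_pos]; simpa [hN] using h0
    rw [memN] at ha
    obtain ⟨b, hb, d, hd, e, he, hbd, hbe, hde⟩ := Finset.two_lt_card.mp (h3 p a ha)
    simp only [cn, Finset.mem_filter, Finset.mem_univ, true_and] at hb hd he
    have hc' : ∀ x y, G.Adj p x → G.Adj p y → x ≠ y → G.Adj x y := by
      intro x y hx hy; exact hc x ((memN x).2 hx) y ((memN y).2 hy)
    exact k5_of_config ha hd.1 he.1 hb.1 hb.1.ne hd.2 he.2 hb.2 hb.2.ne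
      (hc' _ _ hd.1 he.1 hde) (hc' _ _ hd.1 hb.1 hbd.symm) hbd.symm
      (hc' _ _ he.1 hb.1 hbe.symm) hbe.symm (Or.inl rfl)
  · push Not at hc
    obtain ⟨a, ha, b, hb, hab, nab⟩ := hc
    have pa := (memN a).1 ha
    have pb := (memN b).1 hb
    obtain ⟨c, hc, d, hd, e, he, hcd, hce, hde⟩ := Finset.two_lt_card.mp (h3 p a pa)
    simp only [cn, Finset.mem_filter, Finset.mem_univ, true_and] at hc hd he
    have hbc : b ≠ c := by rintro rfl; exact nab hc.2
    have hbd : b ≠ d := by rintro rfl; exact nab hd.2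
    have hbe : b ≠ e := by rintro rfl; exact nab he.2
    have hNeq : ({a, b, c, d, e} : Finset V) = N := by
      apply Finset.eq_of_subset_of_card_le
      · intro x hx
        simp only [Finset.mem_insert, Finset.mem_singleton] at hx
        rw [memN]
        rcases hx with rfl | rfl | rfl | rfl | rfl
        exacts [pa, pb, hc.1, hd.1, he.1]
      · refine hNcard.trans (le_of_eq ?_)
        have := hc.2.ne; have := hd.2.ne; have := he.2.ne
        symm
        rw [Finset.card_insert_of_notMem, Finset.card_insert_of_notMem,
          Finset.card_insert_of_notMem, Finset.card_insert_of_notMem, Finset.card_singleton] <;>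
          simp <;> tauto
    have hNm : ∀ x, G.Adj p x → x = a ∨ x = b ∨ x = c ∨ x = d ∨ x = e := by
      intro x hx
      have := (memN x).2 hx
      rw [← hNeq] at this
      simpa using this
    have hcde : cn G p b = {c, d, e} := by
      apply Finset.eq_of_subset_of_card_le
      · intro x hx
        simp only [cn, Finset.mem_filter, Finset.mem_univ, true_and] at hx
        rcases hNm x hx.1 with rfl | rfl | rfl | rfl | rfl
        · exact absurd hx.2.symm nab
        · exact absurd hx.2 (G.irrefl)
        all_goals simp
      · exact Finset.card_le_three.trans (h3 p b pb)
    have bmem : ∀ x, x ∈ ({c, d, e} : Finset V) → G.Adj b x := by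
      intro x hx
      rw [← hcde] at hx
      simp only [cn, Finset.mem_filter, Finset.mem_univ, true_and] at hx
      exact hx.2
    have bc := bmem c (by simp)
    have bd := bmem d (by simp)
    have be := bmem e (by simp)
    have main : ∀ c d e, G.Adj p c → G.Adj p d → G.Adj p e → G.Adj a c → G.Adj a d → G.Adj a e →
        G.Adj b c → G.Adj b d → G.Adj b e → c ≠ d → c ≠ e → G.Adj d e →
        HasMinor G (⊤ : SimpleGraph (Fin 5)) := by
      intro c d e pc pd pe ac ad ae bc bd be hcd hce de
      exact k5_of_config pa pd pe pb pc.ne ad ae ac hab de bd.symm hcd.symm be.symm hce.symm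
        (Or.inr bc)
    by_cases cd : G.Adj c d
    · exact main e c d he.1 hc.1 hd.1 he.2 hc.2 hd.2 be bc bd hce.symm hde.symm cd
    by_cases ce : G.Adj c e
    · exact main d c e hd.1 hc.1 he.1 hd.2 hc.2 he.2 bd bc be hcd.symm hde ce
    exfalso
    have hsub : cn G p c ⊆ {a, b} := by
      intro x hx
      simp only [cn, Finset.mem_filter, Finset.mem_univ, true_and] at hx
      rcases hNm x hx.1 with rfl | rfl | rfl | rfl | rfl
      · simp
      · simp
      · exact absurd hx.2 (G.irrefl)
      · exact absurd hx.2 cd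
      · exact absurd hx.2 ce
    have h1 := Finset.card_le_card hsub
    have h2 := h3 p c hc.1
    have h4 : ({a, b} : Finset V).card ≤ 2 := Finset.card_le_two
    omega

theorem card_edges_contr {G : SimpleGraph V} {u v : V} (huv : G.Adj u v) :
    G.edgeFinset.card ≤ (contr G u v).edgeFinset.card + 1 + (cn G u v).card := by
  let φ : V → V := fun x => if x = v then u else x
  let R : Finset (Sym2 V) := insert s(u, v) ((cn G u v).image fun c => s(v, c))
  have hR : R.card ≤ 1 + (cn G u v).card := by
    refine (Finset.card_insert_le _ _).trans ?_
    have := Finset.card_image_le (s := cn G u v) (f := fun c => s(v, c))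
    omega
  have hle : (G.edgeFinset \ R).card ≤ (contr G u v).edgeFinset.card := by
    have hne := huv.ne
    have hadj : ∀ a b, G.Adj a b → s(a, b) ∉ R → (a = v → b ≠ u ∧ ¬ G.Adj u b) := by
      rintro a b h hn rfl
      simp only [R, Finset.mem_insert, Finset.mem_image, cn, Finset.mem_filter, Finset.mem_univ,
        true_and, not_or, not_exists, not_and] at hn
      refine ⟨?_, ?_⟩
      · rintro rfl; exact hn.1 Sym2.eq_swap
      · intro hub; exact hn.2 b ⟨hub, h⟩ rfl
    have hadj' : ∀ a b, G.Adj a b → s(a, b) ∉ R → (b = v → a ≠ u ∧ ¬ G.Adj u a) := by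
      intro a b h hn
      exact hadj b a h.symm (by rwa [Sym2.eq_swap])
    apply Finset.card_le_card_of_injOn (Sym2.map φ)
    · intro x
      induction x using Sym2.ind with | _ a b => ?_
      intro hx
      simp only [Finset.coe_sdiff, Set.mem_sdiff, Finset.mem_coe, SimpleGraph.mem_edgeFinset,
        SimpleGraph.mem_edgeSet] at hx
      have e1 := hadj a b hx.1 hx.2
      have e2 := hadj' a b hx.1 hx.2
      have e3 := hx.1.ne
      have e4 := hx.1
      simp only [Sym2.map_mk, Finset.mem_coe, SimpleGraph.mem_edgeFinset,
        SimpleGraph.mem_edgeSet]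
      change (contr G u v).Adj (if a = v then u else a) (if b = v then u else b)
      by_cases ha : a = v
      · subst ha
        have hb : b ≠ a := e3.symm
        simp only [if_true, hb, if_false]
        exact ⟨(e1 rfl).1.symm, hne, hb, Or.inr (Or.inl ⟨rfl, e4⟩)⟩
      · by_cases hb : b = v
        · subst hb
          simp only [if_true, ha, if_false]
          exact ⟨(e2 rfl).1, ha, hne, Or.inr (Or.inr ⟨rfl, e4.symm⟩)⟩
        · simp only [ha, hb, if_false]
          exact ⟨e3, ha, hb, Or.inl e4⟩
    · intro x
      induction x using Sym2.ind with | _ a b => ?_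
      intro hx y
      induction y using Sym2.ind with | _ c d => ?_
      intro hy hxy
      simp only [Finset.coe_sdiff, Set.mem_sdiff, Finset.mem_coe, SimpleGraph.mem_edgeFinset,
        SimpleGraph.mem_edgeSet] at hx hy
      have a1 := hadj a b hx.1 hx.2
      have a2 := hadj' a b hx.1 hx.2
      have a3 := hadj c d hy.1 hy.2
      have a4 := hadj' c d hy.1 hy.2
      have x1 := hx.1
      have y1 := hy.1
      have x2 := x1.symm
      have y2 := y1.symm
      clear hx hy hadj hadj'
      simp only [Sym2.map_mk, φ] at hxy
      rw [Sym2.eq_iff] at hxy ⊢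
      have := x1.ne
      have := y1.ne
      grind
  have := Finset.card_le_card_sdiff_add_card (s := G.edgeFinset) (t := R)
  omega

theorem two_mul_edges {G : SimpleGraph V} {S : Finset V} (hS : ∀ a b, G.Adj a b → a ∈ S) :
    ∑ a ∈ S, G.degree a = 2 * G.edgeFinset.card := by
  rw [← SimpleGraph.sum_degrees_eq_twice_card_edges]
  apply Finset.sum_subset (Finset.subset_univ S)
  intro x _ hx
  by_contra h
  obtain ⟨y, hy⟩ := (G.degree_pos_iff_exists_adj x).1 (Nat.pos_of_ne_zero h)
  exact hx (hS _ _ hy)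

theorem exists_low {G : SimpleGraph V} {S : Finset V} (hS : ∀ a b, G.Adj a b → a ∈ S)
    (hE : G.edgeFinset.card < 3 * S.card) : ∃ p ∈ S, G.degree p ≤ 5 := by
  by_contra! h
  have := two_mul_edges hS
  have h2 : S.card • 6 ≤ ∑ a ∈ S, G.degree a := Finset.card_nsmul_le_sum _ _ _ (fun a ha => h a ha)
  simp only [smul_eq_mul] at h2
  omega

theorem contr_support {G : SimpleGraph V} {S : Finset V} (hS : ∀ a b, G.Adj a b → a ∈ S)
    {u v : V} (huv : G.Adj u v) : ∀ a b, (contr G u v).Adj a b → a ∈ S.erase v := by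
  rintro a b ⟨-, h1, -, h⟩
  refine Finset.mem_erase.2 ⟨h1, ?_⟩
  rcases h with h | ⟨rfl, -⟩ | ⟨-, h⟩
  · exact hS _ _ h
  · exact hS _ _ huv
  · exact hS _ _ h.symm

theorem mader (n : ℕ) : ∀ (G : SimpleGraph V) (S : Finset V), S.card = n → 3 ≤ n →
    (∀ a b, G.Adj a b → a ∈ S) → 3 * n ≤ G.edgeFinset.card + 5 →
    HasMinor G (⊤ : SimpleGraph (Fin 5)) := by
  induction n with
  | zero => intro G S _ h; omega
  | succ n ih =>
    intro G S hcard hn hS hE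
    by_cases hn3 : n = 2
    · exfalso
      subst hn3
      have h1 := two_mul_edges hS
      have h2 : ∑ a ∈ S, G.degree a ≤ S.card • 2 := by
        apply Finset.sum_le_card_nsmul
        intro a ha
        rw [← SimpleGraph.card_neighborFinset_eq_degree]
        have : G.neighborFinset a ⊆ S.erase a := by
          intro b hb
          rw [SimpleGraph.mem_neighborFinset] at hb
          exact Finset.mem_erase.2 ⟨hb.ne', hS _ _ hb.symm⟩
        have := Finset.card_le_card this
        rw [Finset.card_erase_of_mem ha] at this
        omega
      simp only [smul_eq_mul] at h2
      omega
    · obtain ⟨T, hT, hTc⟩ := Finset.exists_subset_card_eq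
        (show 3 * (n + 1) - 5 ≤ G.edgeFinset.card by omega)
      obtain ⟨G', hG', hEc⟩ : ∃ G' : SimpleGraph V, G' ≤ G ∧
          G'.edgeFinset.card = 3 * (n + 1) - 5 := by
        refine ⟨SimpleGraph.fromEdgeSet (T : Set (Sym2 V)), ?_, ?_⟩
        · intro a b h
          have := hT (by simpa using h.1)
          simpa using this
        · rw [← hTc]
          have aux : ∀ G' : SimpleGraph V, G'.edgeSet = (T : Set (Sym2 V)) →
              G'.edgeFinset.card = T.card := by
            intro G' h
            congr 1
            ext x
            rw [SimpleGraph.mem_edgeFinset, h, Finset.mem_coe]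
          refine aux _ ?_
          ext x
          rw [SimpleGraph.edgeSet_fromEdgeSet, Set.mem_sdiff, Finset.mem_coe]
          constructor
          · exact fun h => h.1
          · intro h
            refine ⟨h, ?_⟩
            have := hT h
            rw [SimpleGraph.mem_edgeFinset] at this
            exact G.not_isDiag_of_mem_edgeSet this
      have hS' : ∀ a b, G'.Adj a b → a ∈ S := fun a b h => hS a b (hG' h)
      refine hasMinor_mono hG' ?_
      by_cases hiso : ∃ v ∈ S, G'.degree v = 0
      · obtain ⟨v, hv, hv0⟩ := hiso
        refine ih G' (S.erase v) (by rw [Finset.card_erase_of_mem hv]; omega) (by omega) ?_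
          (by omega)
        intro a b hab
        refine Finset.mem_erase.2 ⟨?_, hS' a b hab⟩
        rintro rfl
        have := (G'.degree_pos_iff_exists_adj a).2 ⟨b, hab⟩
        omega
      · push Not at hiso
        obtain ⟨p, hp, hp5⟩ := exists_low hS' (by omega)
        by_cases h3 : ∀ a b, G'.Adj a b → 3 ≤ (cn G' a b).card
        · exact k5_of_low_degree h3 (Nat.pos_of_ne_zero (hiso p hp)) hp5
        · push Not at h3
          obtain ⟨u, v, huv, hc⟩ := h3
          refine hasMinor_contr huv ?_
          have := card_edges_contr huv
          refine ih _ (S.erase v) (by rw [Finset.card_erase_of_mem (hS' _ _ huv.symm)]; omega)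
            (by omega) (contr_support hS' huv) (by omega)

theorem exists_good_edge {G : SimpleGraph V} (hfree : ¬ HasMinor G (⊤ : SimpleGraph (Fin 5)))
    {a b : V} (hab : G.Adj a b) : ∃ u v, G.Adj u v ∧ (cn G u v).card ≤ 2 := by
  by_contra! h
  apply hfree
  have h3 : ∀ a b, G.Adj a b → 3 ≤ (cn G a b).card := fun a b hab => h a b hab
  let S : Finset V := Finset.univ.filter fun a => 0 < G.degree a
  have hS : ∀ a b, G.Adj a b → a ∈ S := by
    intro a b h
    simp only [S, Finset.mem_filter, Finset.mem_univ, true_and]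
    exact (G.degree_pos_iff_exists_adj a).2 ⟨b, h⟩
  by_cases hE : G.edgeFinset.card < 3 * S.card
  · obtain ⟨p, hp, hp5⟩ := exists_low hS hE
    exact k5_of_low_degree h3 (Finset.mem_filter.1 hp).2 hp5
  · refine mader S.card G S rfl ?_ hS (by omega)
    refine (h3 a b hab).trans (Finset.card_le_card ?_)
    intro c hc
    simp only [cn, Finset.mem_filter, Finset.mem_univ, true_and] at hc
    exact hS _ _ hc.1.symm

end K5Aux

/-! ### Stresses -/

namespace K5Aux

open Function

section abstract_lemmas

variable {F W1 W2 : Type*} [NormedAddCommGroup F] [NormedSpace ℝ F] [FiniteDimensional ℝ F]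
  [NormedAddCommGroup W1] [NormedSpace ℝ W1] [FiniteDimensional ℝ W1]
  [NormedAddCommGroup W2] [NormedSpace ℝ W2]

theorem isOpen_inj (A : F →ₗ[ℝ] W1 →ₗ[ℝ] W2) : IsOpen {f | Injective (A f)} := by
  let A' : F →ₗ[ℝ] (W1 →L[ℝ] W2) := (LinearMap.toContinuousLinearMap (𝕜 := ℝ)).toLinearMap ∘ₗ A
  have hc : Continuous A' := A'.continuous_of_finiteDimensional
  exact (ContinuousLinearMap.isOpen_injective (𝕜 := ℝ) (E := W1) (F := W2)).preimage hc

theorem finite_bad (P Q : W1 →ₗ[ℝ] W2) (h : Injective (P + Q)) :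
    {t : ℝ | ¬ Injective (P + t • Q)}.Finite := by
  obtain ⟨L, hL⟩ := (P + Q).exists_leftInverse_of_injective (LinearMap.ker_eq_bot.2 h)
  let b := Module.finBasis ℝ W1
  let MP := LinearMap.toMatrix b b (L ∘ₗ P)
  let MQ := LinearMap.toMatrix b b (L ∘ₗ Q)
  let M : Matrix _ _ (Polynomial ℝ) :=
    MP.map Polynomial.C + (Polynomial.X : Polynomial ℝ) • MQ.map Polynomial.C
  have hM : ∀ t : ℝ, M.det.eval t = LinearMap.det (L ∘ₗ (P + t • Q)) := by
    intro t
    rw [← LinearMap.det_toMatrix b, ← Polynomial.coe_evalRingHom, RingHom.map_det]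
    congr 1
    ext i j
    simp [M, MP, MQ, LinearMap.comp_add, LinearMap.comp_smul]
    exact mul_comm _ _
  have hne : M.det ≠ 0 := by
    intro h0
    have := hM 1
    rw [h0, one_smul, hL] at this
    simp at this
  refine (Polynomial.finite_setOfPred_isRoot hne).subset ?_
  intro t ht
  by_contra hr
  apply ht
  have hd : LinearMap.det (L ∘ₗ (P + t • Q)) ≠ 0 := by
    rw [← hM]; exact hr
  have : Injective (L ∘ₗ (P + t • Q)) := (LinearMap.equivOfDetNeZero _ hd).injective
  exact Injective.of_comp (f := L) this

theorem dense_inj (A : F →ₗ[ℝ] W1 →ₗ[ℝ] W2) {f0 : F} (h0 : Injective (A f0)) :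
    Dense {f | Injective (A f)} := by
  intro f
  have hfin := finite_bad (A f) (A (f0 - f)) (by rw [← map_add]; simpa using h0)
  have hd : Dense {t : ℝ | ¬ Injective (A f + t • A (f0 - f))}ᶜ := hfin.countable.dense_compl ℝ
  have hc : Continuous fun t : ℝ => f + t • (f0 - f) := by fun_prop
  have h1 := map_mem_closure hc (hd 0) (t := {f | Injective (A f)}) (by
    intro t ht
    simp only [Set.mem_compl_iff, Set.mem_ofPred_eq, not_not] at ht ⊢
    rw [map_add, map_smul]; exact ht)
  simpa using h1

end abstract_lemmas

variable {V : Type*} [Fintype V]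

/-- Symmetric weights supported on the edges of `G`. -/
def Wsub (G : SimpleGraph V) : Submodule ℝ (V → V → ℝ) where
  carrier := {w | (∀ a b, w a b = w b a) ∧ ∀ a b, ¬ G.Adj a b → w a b = 0}
  add_mem' := by
    rintro x y ⟨h1, h2⟩ ⟨h3, h4⟩
    refine ⟨fun a b => ?_, fun a b h => ?_⟩
    · simp [h1 a b, h3 a b]
    · simp [h2 a b h, h4 a b h]
  zero_mem' := ⟨fun _ _ => rfl, fun _ _ _ => rfl⟩
  smul_mem' := by
    rintro c x ⟨h1, h2⟩
    refine ⟨fun a b => ?_, fun a b h => ?_⟩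
    · simp [h1 a b]
    · simp [h2 a b h]

/-- Euclidean space. -/
abbrev E3 := EuclideanSpace ℝ (Fin 3)

/-- Equilibrium operator for a field of directions. -/
noncomputable def R (G : SimpleGraph V) : (V → V → E3) →ₗ[ℝ] Wsub G →ₗ[ℝ] (V → E3) :=
  LinearMap.mk₂ ℝ (fun δ w a => ∑ b, w.1 a b • δ a b)
    (by intros; ext1 a; simp [Finset.sum_add_distrib])
    (by
      intro c δ w
      ext1 a
      simp only [Pi.smul_apply, Finset.smul_sum]
      exact Finset.sum_congr rfl fun b _ => smul_comm _ _ _)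
    (by intros; ext1 a; simp [Finset.sum_add_distrib, add_smul])
    (by intros; ext1 a; simp [Finset.smul_sum, smul_smul])

theorem R_apply (G : SimpleGraph V) (δ : V → V → E3) (w : Wsub G) (a : V) :
    R G δ w a = ∑ b, w.1 a b • δ a b := rfl

/-- Differences. -/
def diffs : (V → E3) →ₗ[ℝ] (V → V → E3) where
  toFun f a b := f a - f b
  map_add' f g := by ext a b : 2; simp only [Pi.add_apply]; abel
  map_smul' c f := by ext a b : 2; simp [smul_sub]

theorem mem_iff (G : SimpleGraph V) (f : V → E3) :
    f ∈ StressFreeEmbeddings G 3 ↔ Injective ((R G ∘ₗ diffs) f) := by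
  rw [← LinearMap.ker_eq_bot, LinearMap.ker_eq_bot']
  constructor
  · intro h w hw
    have h1 := h (fun e => Sym2.lift ⟨fun a b => w.1 a b, w.2.1⟩ e.1) (by
      intro a
      have := congrFun hw a
      simp only [LinearMap.comp_apply, R_apply, Pi.zero_apply] at this
      refine Eq.trans ?_ this
      refine Finset.sum_congr rfl fun b _ => ?_
      split_ifs with hab
      · rfl
      · rw [w.2.2 a b hab, zero_smul])
    ext a b
    by_cases hab : G.Adj a b
    · exact congrFun h1 ⟨s(a, b), hab⟩
    · exact w.2.2 a b hab
  · intro h w hw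
    have h1 := h ⟨fun a b => if hab : G.Adj a b then w ⟨s(a, b), hab⟩ else 0, by
        intro a b
        by_cases hab : G.Adj a b
        · simp only [hab, hab.symm, dif_pos]
          congr 2
          exact Sym2.eq_swap
        · have : ¬ G.Adj b a := fun h => hab h.symm
          simp only [hab, this, dif_neg, not_false_eq_true], by
        intro a b hab
        simp only [hab, dif_neg, not_false_eq_true]⟩ (by
      ext1 a
      simp only [LinearMap.comp_apply, R_apply, Pi.zero_apply]
      rw [← hw a]
      refine Finset.sum_congr rfl fun b _ => ?_
      split_ifs with hab
      · rfl
      · simp)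
    ext ⟨e, he⟩
    induction e using Sym2.ind with | _ a b => ?_
    have := congrFun (congrFun (congrArg Subtype.val h1) a) b
    have hab : G.Adj a b := he
    simpa [hab] using this

theorem generic_of_exists {G : SimpleGraph V} {f : V → E3} (hf : f ∈ StressFreeEmbeddings G 3) :
    GenericallyStressFree G 3 := by
  have : StressFreeEmbeddings G 3 = {f | Injective ((R G ∘ₗ diffs) f)} := by
    ext f; exact mem_iff G f
  rw [GenericallyStressFree, this]
  exact ⟨isOpen_inj _, dense_inj _ ((mem_iff G f).1 hf)⟩

/-- Star operator. -/
noncomputable def star (u : V) (C : Finset V) : (V → E3) →ₗ[ℝ] (C → ℝ) →ₗ[ℝ] E3 :=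
  LinearMap.mk₂ ℝ (fun f c => ∑ a : C, c a • (f u - f a))
    (by intros; simp only [Pi.add_apply, ← Finset.sum_add_distrib, ← smul_add]
        refine Finset.sum_congr rfl fun b _ => ?_
        congr 1; abel)
    (by
      intro c f w
      simp only [Pi.smul_apply, Finset.smul_sum, ← smul_sub]
      exact Finset.sum_congr rfl fun b _ => smul_comm _ _ _)
    (by intros; simp [Finset.sum_add_distrib, add_smul])
    (by intros; simp [Finset.smul_sum, smul_smul])

theorem star_apply (u : V) (C : Finset V) (f : V → E3) (c : C → ℝ) :
    star u C f c = ∑ a : C, c a • (f u - f a) := rfl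

theorem star_exists (u : V) (C : Finset V) (hu : u ∉ C) (hC : C.card ≤ 2) :
    ∃ f : V → E3, Injective (star u C f) := by
  obtain ⟨e⟩ : Nonempty (C ↪ Fin 3) := by
    apply Function.Embedding.nonempty_of_card_le
    simp; omega
  refine ⟨fun a => if h : a ∈ C then - EuclideanSpace.single (e ⟨a, h⟩) (1 : ℝ) else 0, ?_⟩
  rw [← LinearMap.ker_eq_bot, LinearMap.ker_eq_bot']
  intro c hc
  rw [star_apply] at hc
  ext a
  have := congrArg (fun x : E3 => x (e a)) hc
  simp only [hu, dif_neg, not_false_eq_true, Subtype.coe_prop, dif_pos, Subtype.coe_eta,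
    sub_neg_eq_add, zero_add] at this
  simpa [Pi.single_apply, e.injective.eq_iff] using this

theorem split {G : SimpleGraph V} {u v : V} (huv : G.Adj u v) (hc : (cn G u v).card ≤ 2)
    (hH : GenericallyStressFree (contr G u v) 3) : GenericallyStressFree G 3 := by
  have huC : u ∉ cn G u v := by simp [cn]
  have hvC : v ∉ cn G u v := by simp [cn]
  have hne := huv.ne
  obtain ⟨f1, hf1⟩ := star_exists u (cn G u v) huC hc
  obtain ⟨f, hfs, hfH⟩ : ∃ f, Injective (star u (cn G u v) f) ∧
      f ∈ StressFreeEmbeddings (contr G u v) 3 := by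
    obtain ⟨f, hf⟩ := ((dense_inj _ hf1).inter_of_isOpen_left hH.2 (isOpen_inj _)).nonempty
    exact ⟨f, hf.1, hf.2⟩
  -- a direction outside of the span
  obtain ⟨x, hx⟩ : ∃ x : E3, x ∉ LinearMap.range (star u (cn G u v) f) := by
    by_contra! h
    have h1 : LinearMap.range (star u (cn G u v) f) = ⊤ := by
      rw [eq_top_iff]; intro x _; exact h x
    have h2 := LinearMap.finrank_range_le (star u (cn G u v) f)
    rw [h1, finrank_top] at h2
    simp at h2
    omega
  let f0 : V → E3 := Function.update f v (f u)
  let δ0 : V → V → E3 := fun a b =>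
    if a = v ∧ b = u then x else if a = u ∧ b = v then -x else f0 a - f0 b
  let δ1 : V → V → E3 := fun a b =>
    if a = v ∧ b ≠ v ∧ b ≠ u then x else if b = v ∧ a ≠ v ∧ a ≠ u then -x else 0
  have hsplit : ∀ g : V → E3, ∑ b, g b = g u + g v + ∑ b ∈ Finset.univ \ {u, v}, g b := by
    intro g
    rw [← Finset.sum_sdiff (Finset.subset_univ ({u, v} : Finset V)), Finset.sum_pair hne]
    abel
  have hT : ∀ b, b ∈ (Finset.univ \ {u, v} : Finset V) → b ≠ u ∧ b ≠ v := by
    intro b hb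
    simpa using hb
  have f0v : f0 v = f u := by simp [f0]
  have f0n : ∀ a, a ≠ v → f0 a = f a := by intro a ha; simp [f0, ha]
  have d0 : ∀ a b, a ≠ u → a ≠ v → δ0 a b = f0 a - f0 b := by
    intro a b h1 h2; simp [δ0, h1, h2]
  have d0u : ∀ b, b ≠ v → δ0 u b = f u - f0 b := by
    intro b h1; simp [δ0, hne, h1, f0n u hne]
  have d0v : ∀ b, b ≠ u → δ0 v b = f u - f0 b := by
    intro b h1; simp [δ0, hne.symm, h1, f0v]
  have d0uv : δ0 u v = -x := by simp [δ0, hne]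
  have d0vu : δ0 v u = x := by simp [δ0]
  have inj0 : Injective (R G δ0) := by
    rw [← LinearMap.ker_eq_bot, LinearMap.ker_eq_bot']
    intro w hw
    have eq : ∀ a, ∑ b, w.1 a b • δ0 a b = 0 := fun a => congrFun hw a
    have wsymm := w.2.1
    have wz := w.2.2
    have wd : ∀ a, w.1 a a = 0 := fun a => wz a a (G.irrefl)
    have equ := eq u
    have eqv := eq v
    rw [hsplit, wd, d0uv, zero_smul, zero_add] at equ
    rw [hsplit, wd, d0vu, zero_smul, add_zero, wsymm v u] at eqv
    have equ' : w.1 u v • (-x) + ∑ b ∈ Finset.univ \ {u, v}, w.1 u b • (f u - f b) = 0 := by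
      rw [← equ]; congr 1
      refine Finset.sum_congr rfl fun b hb => ?_
      rw [d0u b (hT b hb).2, f0n b (hT b hb).2]
    have eqv' : w.1 u v • x + ∑ b ∈ Finset.univ \ {u, v}, w.1 v b • (f u - f b) = 0 := by
      rw [← eqv]; congr 1
      refine Finset.sum_congr rfl fun b hb => ?_
      rw [d0v b (hT b hb).1, f0n b (hT b hb).2]
    let w' : V → V → ℝ := fun a b =>
      if a = v ∨ b = v ∨ a = b then 0
      else if a = u then w.1 u b + w.1 v b
      else if b = u then w.1 a u + w.1 a v else w.1 a b
    have w'mem : w' ∈ Wsub (contr G u v) := by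
      refine ⟨fun a b => ?_, fun a b h => ?_⟩
      · simp only [w']
        have := wsymm a b
        have := wsymm a u
        have := wsymm a v
        have := wsymm b u
        have := wsymm b v
        grind
      · simp only [contr, not_and, not_or] at h
        simp only [w']
        split_ifs with h1 h2 h3
        · rfl
        · subst h2
          push Not at h1
          have h4 := h h1.2.2 h1.1 h1.2.1
          rw [wz _ _ h4.1, wz _ _ (h4.2.1 rfl), add_zero]
        · subst h3
          push Not at h1
          have h4 := h h1.2.2 h1.1 h1.2.1
          rw [wz _ _ h4.1, wz a v (fun h => h4.2.2 rfl h.symm), add_zero]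
        · push Not at h1
          exact wz _ _ (h h1.2.2 h1.1 h1.2.1).1
    have w'0 : (⟨w', w'mem⟩ : Wsub (contr G u v)) = 0 := by
      have hk := (mem_iff _ _).1 hfH
      rw [← LinearMap.ker_eq_bot, LinearMap.ker_eq_bot'] at hk
      apply hk
      ext1 a
      rw [LinearMap.comp_apply, R_apply]
      change ∑ b, w' a b • (f a - f b) = 0
      by_cases hav : a = v
      · apply Finset.sum_eq_zero
        intro b _
        simp [w', hav]
      by_cases hau : a = u
      · subst hau
        rw [hsplit]
        have e1 : w' a v = 0 := by simp [w']
        rw [sub_self, smul_zero, e1, zero_smul, zero_add, zero_add]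
        have e2 : ∑ b ∈ Finset.univ \ {a, v}, w' a b • (f a - f b) =
            ∑ b ∈ Finset.univ \ {a, v}, w.1 a b • (f a - f b) +
            ∑ b ∈ Finset.univ \ {a, v}, w.1 v b • (f a - f b) := by
          rw [← Finset.sum_add_distrib]
          refine Finset.sum_congr rfl fun b hb => ?_
          rw [← add_smul]
          simp [w', hav, (hT b hb).2, (hT b hb).1.symm]
        rw [e2]
        have e3 := congrArg₂ (· + ·) equ' eqv'
        simp only [add_zero] at e3
        rw [← e3, smul_neg]
        abel
      · have ea := eq a
        rw [hsplit] at ea ⊢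
        rw [d0 a u hau hav, d0 a v hau hav, f0v, f0n a hav, f0n u hne, ← add_smul] at ea
        have e1 : w' a v = 0 := by simp [w']
        have e2 : w' a u = w.1 a u + w.1 a v := by simp [w', hav, hau, hne]
        rw [e1, e2, zero_smul, add_zero, ← ea]
        congr 1
        refine Finset.sum_congr rfl fun b hb => ?_
        rw [d0 a b hau hav, f0n a hav, f0n b (hT b hb).2]
        by_cases hab : a = b
        · subst hab; simp
        · simp [w', hav, (hT b hb).2, (hT b hb).1, hau, hab]
    have w'z : ∀ a b, w' a b = 0 := fun a b =>
      congrFun (congrFun (congrArg Subtype.val w'0) a) b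
    have hub : ∀ b, b ≠ u → b ≠ v → w.1 u b + w.1 v b = 0 := by
      intro b h1 h2
      have := w'z u b
      simpa [w', hne, h1.symm, h2] using this
    have hrest : ∀ a b, a ≠ u → a ≠ v → b ≠ u → b ≠ v → w.1 a b = 0 := by
      intro a b h1 h2 h3 h4
      by_cases hab : a = b
      · subst hab; exact wd a
      have := w'z a b
      simpa [w', h1, h2, h3, h4, hab] using this
    have hC : ∀ b, b ∉ cn G u v → b ≠ u → b ≠ v → w.1 u b = 0 := by
      intro b hb h1 h2
      by_cases h3 : G.Adj u b
      · have h4 : ¬ G.Adj v b := fun h => hb (by simp [cn, h3, h])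
        have := hub b h1 h2
        rwa [wz _ _ h4, add_zero] at this
      · exact wz _ _ h3
    have hstar : star u (cn G u v) f (fun a => w.1 u a) = w.1 u v • x := by
      rw [star_apply]
      have e1 : ∑ a : cn G u v, w.1 u a • (f u - f a) =
          ∑ a ∈ cn G u v, w.1 u a • (f u - f a) :=
        Finset.sum_coe_sort (cn G u v) (fun a => w.1 u a • (f u - f a))
      have e2 : ∑ a ∈ cn G u v, w.1 u a • (f u - f a) =
          ∑ b ∈ Finset.univ \ {u, v}, w.1 u b • (f u - f b) := by
        apply Finset.sum_subset
        · intro a ha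
          simp only [Finset.mem_sdiff, Finset.mem_univ, true_and, Finset.mem_insert,
            Finset.mem_singleton, not_or]
          exact ⟨fun h => huC (h ▸ ha), fun h => hvC (h ▸ ha)⟩
        · intro a ha hn
          rw [hC a hn (hT a ha).1 (hT a ha).2, zero_smul]
      rw [e1, e2]
      rw [smul_neg] at equ'
      exact (neg_add_eq_zero.1 equ').symm
    have huv0 : w.1 u v = 0 := by
      by_contra h0
      apply hx
      refine ⟨(w.1 u v)⁻¹ • (fun a : cn G u v => w.1 u a), ?_⟩
      rw [map_smul, hstar, smul_smul, inv_mul_cancel₀ h0, one_smul]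
    have hu0 : ∀ b, w.1 u b = 0 := by
      intro b
      by_cases h1 : b = u
      · rw [h1]; exact wd u
      by_cases h2 : b = v
      · rw [h2]; exact huv0
      by_cases h3 : b ∈ cn G u v
      · rw [huv0, zero_smul, ← map_zero (star u (cn G u v) f)] at hstar
        exact congrFun (hfs hstar) ⟨b, h3⟩
      · exact hC b h3 h1 h2
    have hv0 : ∀ b, w.1 v b = 0 := by
      intro b
      by_cases h1 : b = u
      · rw [h1, wsymm]; exact huv0
      by_cases h2 : b = v
      · rw [h2]; exact wd v
      have := hub b h1 h2
      rwa [hu0 b, zero_add] at this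
    ext a b
    change w.1 a b = 0
    by_cases h1 : a = u
    · rw [h1]; exact hu0 b
    by_cases h2 : a = v
    · rw [h2]; exact hv0 b
    by_cases h3 : b = u
    · rw [h3, wsymm]; exact hu0 a
    by_cases h4 : b = v
    · rw [h4, wsymm]; exact hv0 a
    exact hrest a b h1 h2 h3 h4
  obtain ⟨t, ht0, ht⟩ : ∃ t : ℝ, t ≠ 0 ∧ Injective (R G (δ0 + t • δ1)) := by
    have hcont : Continuous fun t : ℝ => δ0 + t • δ1 := by fun_prop
    have hop := (isOpen_inj (R G)).preimage hcont
    have hmem : ∀ᶠ t : ℝ in nhds 0, Injective (R G (δ0 + t • δ1)) :=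
      hop.mem_nhds (by simpa using inj0)
    have h2 := (hmem.filter_mono (nhdsWithin_le_nhds (s := {0}ᶜ))).and self_mem_nhdsWithin
    obtain ⟨t, h1, h2⟩ := h2.exists
    exact ⟨t, h2, h1⟩
  let ft : V → E3 := Function.update f v (f u + t • x)
  apply generic_of_exists (f := ft)
  rw [mem_iff, ← LinearMap.ker_eq_bot, LinearMap.ker_eq_bot']
  intro w hw
  have wsymm := w.2.1
  have wz := w.2.2
  have wd : ∀ a, w.1 a a = 0 := fun a => wz a a (G.irrefl)
  let c : V → V → ℝ := fun a b => if (a = v ∧ b = u) ∨ (a = u ∧ b = v) then t else 1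
  have hc0 : ∀ a b, c a b ≠ 0 := by
    intro a b; simp only [c]; split_ifs; exacts [ht0, one_ne_zero]
  have hcs : ∀ a b, c a b = c b a := by intro a b; simp only [c]; grind
  have hδ : ∀ a b, a ≠ b → c a b • (δ0 + t • δ1) a b = ft a - ft b := by
    intro a b hab
    simp only [Pi.add_apply, Pi.smul_apply, c, δ0, δ1, ft, f0, Function.update_apply]
    by_cases h1 : a = v
    · subst h1
      by_cases h2 : b = u
      · subst h2
        simp [hne]
      · simp [hne.symm, h2, hab.symm]
        abel
    · by_cases h2 : b = v
      · subst h2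
        by_cases h3 : a = u
        · subst h3
          simp [hne]
        · simp [h1, h3, hne.symm]
          abel
      · simp [h1, h2]
  have h1 : (⟨fun a b => c a b * w.1 a b, fun a b => by
        change c a b * w.1 a b = c b a * w.1 b a
        rw [hcs, wsymm],
      fun a b h => by
        change c a b * w.1 a b = 0
        rw [wz a b h, mul_zero]⟩ : Wsub G) = 0 := by
    rw [← LinearMap.ker_eq_bot, LinearMap.ker_eq_bot'] at ht
    apply ht
    ext1 a
    rw [← hw, LinearMap.comp_apply, R_apply, R_apply]
    refine Finset.sum_congr rfl fun b _ => ?_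
    by_cases hab : a = b
    · subst hab; simp [wd]
    · change _ = w.1 a b • (ft a - ft b)
      rw [← hδ a b hab, smul_smul, mul_comm]
  ext a b
  have := congrFun (congrFun (congrArg Subtype.val h1) a) b
  exact (mul_eq_zero.1 this).resolve_left (hc0 a b)

theorem main_aux (n : ℕ) : ∀ (G : SimpleGraph V) (S : Finset V), S.card = n →
    (∀ a b, G.Adj a b → a ∈ S) →
    ¬ HasMinor G (⊤ : SimpleGraph (Fin 5)) → GenericallyStressFree G 3 := by
  induction n with
  | zero =>
    intro G S h0 hS _
    apply generic_of_exists (f := 0)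
    intro w _
    ext ⟨e, he⟩
    induction e using Sym2.ind with | _ a b => ?_
    have := hS a b he
    rw [Finset.card_eq_zero.1 h0] at this
    simp at this
  | succ n ih =>
    intro G S hc hS hfree
    by_cases hE : ∃ a b, G.Adj a b
    · obtain ⟨a, b, hab⟩ := hE
      obtain ⟨u, v, huv, h2⟩ := exists_good_edge hfree hab
      refine split huv h2 (ih _ (S.erase v) ?_ (contr_support hS huv)
        fun h => hfree (hasMinor_contr huv h))
      rw [Finset.card_erase_of_mem (hS _ _ huv.symm)]
      omega
    · apply generic_of_exists (f := 0)
      intro w _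
      ext ⟨e, he⟩
      induction e using Sym2.ind with | _ a b => ?_
      exact absurd ⟨a, b, he⟩ hE

end K5Aux

/-- Every finite simple graph with no `K₅` minor (in particular, every planar graph)
is generically `3`-stress free. -/
theorem k5MinorFree_genericallyThreeStressFree {V : Type*} [Fintype V] (G : SimpleGraph V)
    (hfree : ¬ HasMinor G (⊤ : SimpleGraph (Fin 5))) :
    GenericallyStressFree G 3 := by
  exact K5Aux.main_aux _ G Finset.univ rfl (fun a _ _ => Finset.mem_univ a) hfree
end
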